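/- arXiv:2311.02547 — 3 statements merged into one kernel-verified Lean document; each statement's English description precedes it below -/
import Mathlib

section
/- Let w ≥ 4 be an even integer. Then Σ_{a+c=w−1, a≥2, c≥1, a odd (hence c even)} ζ(a,1,c) = ζ(w−1,1) + (1/2)·(ζ(2,w−2) − ζ(w−2,2)) − (1/4)·ζ(w). -/
/-- The multiple zeta value `ζ(s₁,…,s_d) = Σ_{k₁>⋯>k_d≥1} 1/(k₁^{s₁}⋯k_d^{s_d})`. -/
noncomputable def mzv {d : ℕ} (s : Fin d → ℕ) : ℝ :=
  ∑' k : {k : Fin d → ℕ // StrictAnti k ∧ ∀ i, 0 < k i},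
    ∏ i, (1 : ℝ) / (k.1 i : ℝ) ^ s i

/-! Write `H` for the harmonic numbers and put `w = 2n + 4`, `a = 2i + 3`. Summing the geometric
progression over `i` in `Σ_i ζ(2i+3,1,2n-2i)` gives
`Σ_{k>l>m} (m^{-2n} - k^{-2n}) · 1/(k l (k² - m²))`.
All terms are nonnegative, so the two halves may be summed in different orders, and it remains to
compare the kernel `1/(k l (k² - m²))` summed over `k > l > m` for fixed smallest index `m` with its
sum over `N > l > p` for fixed largest index `N = m`. The first sum telescopes in `k` and then in
`l`; the second reduces by `2N/(N² - p²) = 1/(N - p) + 1/(N + p)` to convolutions of harmonic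
numbers. Both contain `1/(2m²) · Σ_{p<m} (H_{m-1} - H_p)/(m + p)`, which cancels in the difference,
and what is left of the difference,
`m^{-3} H_{m-1} + ½ m^{-2} (Σ_{k>m} k^{-2} - H^{(2)}_{m-1}) - ¼ m^{-4}`,
gives the right-hand side after multiplication by `m^{-2n}` and summation over `m`. -/

open Filter Finset Matrix Topology

lemma tsum_sigma_of_nonneg_of_finite {α : Type*} {β : α → Type*} [∀ a, Finite (β a)]
    {f : (Σ a, β a) → ℝ} (hf : ∀ p, 0 ≤ f p) : ∑' p, f p = ∑' a, ∑' b, f ⟨a, b⟩ := by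
  by_cases h : Summable f
  · exact h.tsum_sigma
  · rw [tsum_eq_zero_of_not_summable h, tsum_eq_zero_of_not_summable fun h' =>
      h ((summable_sigma_of_nonneg hf).2 ⟨fun _ => .of_finite, h'⟩)]

lemma hasSum_prod_iff_of_nonneg {α β : Type*} {f : α × β → ℝ} (hf : 0 ≤ f) {g : α → ℝ}
    (hg : ∀ a, HasSum (fun b => f (a, b)) (g a)) {s : ℝ} : HasSum f s ↔ HasSum g s := by
  refine ⟨fun h => h.prod_fiberwise hg, fun h => ?_⟩
  have hf_sum : Summable f := (summable_prod_of_nonneg hf).2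
    ⟨fun a => (hg a).summable, h.summable.congr fun a => (hg a).tsum_eq.symm⟩
  have hs := (hf_sum.hasSum.prod_fiberwise hg).unique h
  exact hs ▸ hf_sum.hasSum

lemma hasSum_ite_gt_iff {M : Type*} [AddCommMonoid M] [TopologicalSpace M] {f : ℕ → M} {m : ℕ}
    {s : M} :
    HasSum (fun k => if m < k then f k else 0) s ↔ HasSum (fun i => f (m + 1 + i)) s := by
  have hinj : Function.Injective fun i => m + 1 + i := add_right_injective _
  rw [← hinj.hasSum_iff]
  · refine iff_of_eq (congrArg (HasSum · s) (funext fun i => if_pos (by dsimp only; omega)))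
  · intro k hk
    refine if_neg fun h => hk ⟨k - (m + 1), ?_⟩
    dsimp only
    omega

lemma hasSum_sum_range_iff_of_nonneg {f : ℕ → ℕ → ℝ} (hf : ∀ k, ∀ m < k, 0 ≤ f k m) {g : ℕ → ℝ}
    (hg : ∀ m, HasSum (fun i => f (m + 1 + i) m) (g m)) {s : ℝ} :
    HasSum (fun k => ∑ m ∈ range k, f k m) s ↔ HasSum g s := by
  let F : ℕ × ℕ → ℝ := fun p => if p.2 < p.1 then f p.1 p.2 else 0
  have hF : 0 ≤ F := fun p => by
    dsimp only [F, Pi.zero_apply]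
    split_ifs with h
    exacts [hf _ _ h, le_rfl]
  have hrow (k : ℕ) : HasSum (fun m => F (k, m)) (∑ m ∈ range k, f k m) := by
    rw [sum_congr rfl fun m hm => (if_pos (mem_range.1 hm) : F (k, m) = f k m).symm]
    exact hasSum_sum_of_ne_finset_zero fun m hm => if_neg (by simpa using hm)
  have hcol (m : ℕ) : HasSum (fun k => (F ∘ Equiv.prodComm ℕ ℕ) (m, k)) (g m) :=
    hasSum_ite_gt_iff.2 (hg m)
  rw [← hasSum_prod_iff_of_nonneg hF hrow, ← (Equiv.prodComm ℕ ℕ).hasSum_iff,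
    hasSum_prod_iff_of_nonneg (f := F ∘ Equiv.prodComm ℕ ℕ) (fun p => hF p.swap) hcol]

lemma sum_range_mul_sum_range {R : Type*} [CommRing R] (u v : ℕ → R) (n : ℕ) :
    ∑ l ∈ range n, u l * ∑ m ∈ range l, v m =
      ∑ m ∈ range n, v m * (∑ l ∈ range n, u l - ∑ l ∈ range (m + 1), u l) := by
  induction n with
  | zero => simp
  | succ n ih =>
    rw [sum_range_succ, ih, sum_range_succ _ n, sub_self, mul_zero, add_zero, mul_sum,
      ← sum_add_distrib]
    exact sum_congr rfl fun m _ => by rw [sum_range_succ u n]; ring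

section MultipleHarmonicSum

variable {d : ℕ}

/-- The tuples `n ≥ k₁ > ⋯ > k_d ≥ 1`, over which a multiple harmonic sum is taken. -/
def decreasingTuples (d n : ℕ) : Finset (Fin d → ℕ) :=
  {k ∈ Fintype.piFinset fun _ => Icc 1 n | StrictAnti k}

lemma mem_decreasingTuples {n : ℕ} {k : Fin d → ℕ} :
    k ∈ decreasingTuples d n ↔ StrictAnti k ∧ ∀ i, 0 < k i ∧ k i ≤ n := by
  simp [decreasingTuples, and_comm, Nat.one_le_iff_ne_zero, Nat.pos_iff_ne_zero]

lemma strictAnti_iff_vecTail {α : Type*} [Preorder α] {k : Fin (d + 1) → α} :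
    StrictAnti k ↔ StrictAnti (vecTail k) ∧ ∀ i, vecTail k i < k 0 := by
  refine ⟨fun h => ⟨h.comp_strictMono (Fin.strictMono_succ), fun i => h i.succ_pos⟩, ?_⟩
  rintro ⟨htail, hhead⟩ i j hij
  obtain ⟨j, rfl⟩ := Fin.exists_succ_eq.2 (Fin.ne_zero_of_lt hij)
  cases i using Fin.cases with
  | zero => exact hhead j
  | succ i => exact htail (Fin.succ_lt_succ_iff.1 hij)

lemma strictAnti_and_pos_iff {k : Fin (d + 1) → ℕ} :
    (StrictAnti k ∧ ∀ i, 0 < k i) ↔ 0 < k 0 ∧ vecTail k ∈ decreasingTuples d (k 0 - 1) := by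
  rw [strictAnti_iff_vecTail, Fin.forall_fin_succ, mem_decreasingTuples, and_left_comm]
  refine and_congr_right fun h0 => ?_
  rw [and_assoc, ← forall_and]
  refine and_congr_right fun _ => forall_congr' fun i => ?_
  change vecTail k i < k 0 ∧ 0 < vecTail k i ↔ _
  omega

/-- Splitting a decreasing tuple of positive integers into its largest entry `n + 1` and the
remaining entries, which are at most `n`. -/
def sigmaDecreasingTuplesEquiv (d : ℕ) :
    (Σ n, decreasingTuples d n) ≃ {k : Fin (d + 1) → ℕ // StrictAnti k ∧ ∀ i, 0 < k i} where
  toFun p := ⟨vecCons (p.1 + 1) p.2, strictAnti_and_pos_iff.2 ⟨Nat.succ_pos _, p.2.2⟩⟩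
  invFun k := ⟨k.1 0 - 1, vecTail k.1, (strictAnti_and_pos_iff.1 k.2).2⟩
  left_inv _ := rfl
  right_inv k := Subtype.ext <| by
    dsimp only
    rw [Nat.sub_add_cancel (k.2.2 0)]
    exact cons_head_tail k.1

/-- The multiple harmonic sum `Σ_{n≥k₁>⋯>k_d≥1} 1/(k₁^{s₁}⋯k_d^{s_d})`; in depth one,
`mhs ![r] n` is the generalized harmonic number `H_n^{(r)}`. -/
noncomputable def mhs (s : Fin d → ℕ) (n : ℕ) : ℝ :=
  ∑ k ∈ decreasingTuples d n, ∏ i, (1 : ℝ) / (k i : ℝ) ^ s i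

lemma mzv_vecCons (a : ℕ) (s : Fin d → ℕ) :
    mzv (vecCons a s) = ∑' n : ℕ, 1 / ((n : ℝ) + 1) ^ a * mhs s n := by
  rw [mzv, ← (sigmaDecreasingTuplesEquiv d).tsum_eq,
    tsum_sigma_of_nonneg_of_finite fun _ => by positivity]
  refine tsum_congr fun n => ?_
  rw [mhs, mul_sum, ← Finset.tsum_subtype]
  refine tsum_congr fun k => ?_
  change ∏ i, (1 : ℝ) / (vecCons (n + 1) k.1 i : ℕ) ^ vecCons a s i = _
  simp [Fin.prod_univ_succ, mul_comm]

lemma mhs_vecEmpty (n : ℕ) : mhs ![] n = 1 := by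
  have h : decreasingTuples 0 n = {![]} := by
    ext k
    simp [mem_decreasingTuples, StrictAnti, Subsingleton.elim k ![]]
  simp [mhs, h]

lemma mem_decreasingTuples_succ {n : ℕ} {k : Fin (d + 1) → ℕ} :
    k ∈ decreasingTuples (d + 1) n ↔
      k 0 ≤ n ∧ 0 < k 0 ∧ vecTail k ∈ decreasingTuples d (k 0 - 1) := by
  rw [← strictAnti_and_pos_iff, mem_decreasingTuples]
  refine ⟨fun ⟨hk, h⟩ => ⟨(h 0).2, hk, fun i => (h i).1⟩, fun ⟨h0, hk, hpos⟩ => ⟨hk, fun i => ?_⟩⟩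
  exact ⟨hpos i, (hk.antitone (Fin.zero_le i)).trans h0⟩

lemma mhs_vecCons (a : ℕ) (s : Fin d → ℕ) (n : ℕ) :
    mhs (vecCons a s) n = ∑ m ∈ range n, 1 / ((m : ℝ) + 1) ^ a * mhs s m := by
  simp_rw [mhs, mul_sum]
  rw [sum_sigma']
  symm
  refine sum_nbij' (fun p => vecCons (p.1 + 1) p.2) (fun k => ⟨k 0 - 1, vecTail k⟩)
    ?_ ?_ ?_ ?_ ?_
  · intro p hp
    rw [mem_sigma, mem_range] at hp
    exact mem_decreasingTuples_succ.2 ⟨hp.1, Nat.succ_pos _, hp.2⟩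
  · intro k hk
    obtain ⟨hn, hpos, htail⟩ := mem_decreasingTuples_succ.1 hk
    exact mem_sigma.2 ⟨mem_range.2 (by dsimp only; omega), htail⟩
  · intro p _
    rfl
  · intro k hk
    obtain ⟨-, hpos, -⟩ := mem_decreasingTuples_succ.1 hk
    dsimp only
    rw [Nat.sub_add_cancel hpos]
    exact cons_head_tail k
  · intro p _
    simp [Fin.prod_univ_succ, mul_comm]

lemma mhs_singleton (r n : ℕ) : mhs ![r] n = ∑ i ∈ range n, 1 / ((i : ℝ) + 1) ^ r := by
  simp only [mhs_vecCons, mhs_vecEmpty, mul_one]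

lemma mhs_singleton_zero (r : ℕ) : mhs ![r] 0 = 0 := by
  rw [mhs_singleton, range_zero, sum_empty]

lemma mhs_singleton_succ (r n : ℕ) : mhs ![r] (n + 1) = mhs ![r] n + 1 / ((n : ℝ) + 1) ^ r := by
  rw [mhs_singleton, mhs_singleton, sum_range_succ]

lemma mhs_nonneg (s : Fin d → ℕ) (n : ℕ) : 0 ≤ mhs s n :=
  sum_nonneg fun _ _ => by positivity

lemma mhs_singleton_monotone (r : ℕ) : Monotone (mhs ![r]) :=
  monotone_nat_of_le_succ fun n => by
    rw [mhs_singleton_succ]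
    exact le_add_of_nonneg_right (by positivity)

end MultipleHarmonicSum

section Convergence

-- Moving half a unit of exponent from `x` to `y` separates the variables, with both exponents
-- above one.
lemma one_div_pow_mul_one_div_pow_le {a b : ℕ} (ha : 2 ≤ a) (hb : 1 ≤ b) {x y : ℝ} (hy : 1 ≤ y)
    (hyx : y ≤ x) : 1 / x ^ a * (1 / y ^ b) ≤ 1 / x ^ (3 / 2 : ℝ) * (1 / y ^ (3 / 2 : ℝ)) := by
  have hy0 : 0 < y := by linarith
  have hx0 : 0 < x := by linarith
  rw [one_div_mul_one_div, one_div_mul_one_div]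
  refine one_div_le_one_div_of_le (by positivity) ?_
  calc x ^ (3 / 2 : ℝ) * y ^ (3 / 2 : ℝ) = x ^ (3 / 2 : ℝ) * (y ^ (1 / 2 : ℝ) * y) := by
        rw [← Real.rpow_add_one hy0.ne']; norm_num
    _ ≤ x ^ (3 / 2 : ℝ) * (x ^ (1 / 2 : ℝ) * y) := by gcongr
    _ = x ^ 2 * y ^ 1 := by
        rw [← mul_assoc, ← Real.rpow_add hx0, pow_one]; norm_num
    _ ≤ x ^ a * y ^ b := by gcongr; exact hy.trans hyx

lemma summable_one_div_nat_add_one_rpow {p : ℝ} (hp : 1 < p) :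
    Summable fun n : ℕ => 1 / ((n : ℝ) + 1) ^ p := by
  simpa using (summable_nat_add_iff 1).2 (Real.summable_one_div_nat_rpow.2 hp)

lemma summable_mul_mhs_singleton {a b : ℕ} (ha : 2 ≤ a) (hb : 1 ≤ b) :
    Summable fun n : ℕ => 1 / ((n : ℝ) + 1) ^ a * mhs ![b] n := by
  have hsum := summable_one_div_nat_add_one_rpow (p := 3 / 2) (by norm_num)
  refine .of_nonneg_of_le (fun n => mul_nonneg (by positivity) (mhs_nonneg _ n)) (fun n => ?_)
    (hsum.mul_right (∑' m : ℕ, 1 / ((m : ℝ) + 1) ^ (3 / 2 : ℝ)))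
  calc 1 / ((n : ℝ) + 1) ^ a * mhs ![b] n
      = ∑ m ∈ range n, 1 / ((n : ℝ) + 1) ^ a * (1 / ((m : ℝ) + 1) ^ b) := by
        rw [mhs_singleton, mul_sum]
    _ ≤ ∑ m ∈ range n, 1 / ((n : ℝ) + 1) ^ (3 / 2 : ℝ) * (1 / ((m : ℝ) + 1) ^ (3 / 2 : ℝ)) := by
        refine sum_le_sum fun m hm => one_div_pow_mul_one_div_pow_le ha hb (by simp) ?_
        gcongr
        exact (mem_range.1 hm).le
    _ ≤ _ := by
        rw [← mul_sum]
        gcongr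
        exact hsum.sum_le_tsum _ fun _ _ => by positivity

lemma hasSum_mzv_singleton {a : ℕ} (ha : 2 ≤ a) :
    HasSum (fun n : ℕ => 1 / ((n : ℝ) + 1) ^ a) (mzv ![a]) := by
  have hsum := summable_one_div_nat_add_one_rpow (p := a) (by exact_mod_cast ha)
  simp only [Real.rpow_natCast] at hsum
  simpa only [mzv_vecCons, mhs_vecEmpty, mul_one] using hsum.hasSum

lemma hasSum_mzv_pair {a b : ℕ} (ha : 2 ≤ a) (hb : 1 ≤ b) :
    HasSum (fun n : ℕ => 1 / ((n : ℝ) + 1) ^ a * mhs ![b] n) (mzv ![a, b]) := by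
  simpa only [mzv_vecCons] using (summable_mul_mhs_singleton ha hb).hasSum

end Convergence

section HarmonicNumbers

lemma mhs_one_sub_mhs_one {m n : ℕ} (h : m ≤ n) :
    mhs ![1] n - mhs ![1] m = ∑ i ∈ Ico m n, 1 / ((i : ℝ) + 1) := by
  simp only [mhs_singleton, pow_one]
  exact (sum_Ico_eq_sub _ h).symm

lemma sum_one_div_sub (n : ℕ) : ∑ i ∈ range n, 1 / ((n : ℝ) - i) = mhs ![1] n := by
  rw [mhs_singleton, ← sum_range_reflect]
  refine sum_congr rfl fun i hi => ?_
  have := mem_range.1 hi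
  rw [show n - 1 - i = n - (i + 1) by omega, Nat.cast_sub (by omega)]
  simp

lemma sum_one_div_mul_one_div_sub (n : ℕ) :
    ∑ i ∈ range n, 1 / ((i : ℝ) + 1) * (1 / ((n : ℝ) - i)) = 2 * mhs ![1] n / (n + 1) := by
  have hsplit : ∀ i ∈ range n, 1 / ((i : ℝ) + 1) * (1 / ((n : ℝ) - i)) =
      (1 / ((i : ℝ) + 1) ^ 1 + 1 / ((n : ℝ) - i)) / (n + 1) := by
    intro i hi
    have hin : (i : ℝ) < n := by exact_mod_cast mem_range.1 hi
    have : (n : ℝ) - i ≠ 0 := by linarith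
    field_simp
    ring
  rw [sum_congr rfl hsplit, ← sum_div, sum_add_distrib, sum_one_div_sub, ← mhs_singleton]
  ring

lemma sum_mhs_one_sub_div_add_one (n : ℕ) :
    ∑ i ∈ range n, (mhs ![1] n - mhs ![1] (n - i)) / ((i : ℝ) + 1) =
      mhs ![2] n - 2 * mhs ![1] n / (n + 1) := by
  induction n with
  | zero => simp [mhs_singleton_zero]
  | succ n ih =>
    have hstep : ∀ i ∈ range (n + 1),
        (mhs ![1] (n + 1) - mhs ![1] (n + 1 - i)) / ((i : ℝ) + 1) =
          (mhs ![1] n - mhs ![1] (n - i)) / ((i : ℝ) + 1) +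
            1 / ((n : ℝ) + 1) * (1 / ((i : ℝ) + 1) ^ 1) -
            1 / ((i : ℝ) + 1) * (1 / (((n + 1 : ℕ) : ℝ) - i)) := by
      intro i hi
      have hin : i ≤ n := Nat.lt_succ_iff.1 (mem_range.1 hi)
      rw [Nat.sub_add_comm hin, mhs_singleton_succ, mhs_singleton_succ, Nat.cast_sub hin]
      push_cast
      ring
    rw [sum_congr rfl hstep, sum_sub_distrib, sum_add_distrib, ← mul_sum, ← mhs_singleton,
      sum_one_div_mul_one_div_sub, sum_range_succ, ih, Nat.sub_self, mhs_singleton_zero]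
    simp only [mhs_singleton_succ]
    push_cast
    field_simp
    ring

lemma sum_mhs_one_sub_div_sub (n : ℕ) :
    ∑ m ∈ range n, (mhs ![1] n - mhs ![1] (m + 1)) / ((n : ℝ) - m) =
      mhs ![2] n - 2 * mhs ![1] n / (n + 1) := by
  rw [← sum_mhs_one_sub_div_add_one, ← sum_range_reflect]
  refine sum_congr rfl fun i hi => ?_
  have := mem_range.1 hi
  rw [show n - 1 - i + 1 = n - i by omega, show n - 1 - i = n - (i + 1) by omega,
    Nat.cast_sub (by omega)]
  simp

lemma sum_sum_one_div_mul_add_sub (n : ℕ) :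
    ∑ p ∈ range n, ∑ i ∈ range (p + 1),
        1 / (((n : ℝ) + 2 + i) * ((n : ℝ) + 2 + i - (p + 1 : ℕ))) =
      ∑ m ∈ range n, (mhs ![1] (n + 1) - mhs ![1] (m + 1)) / ((n : ℝ) + 2 + m) := by
  rw [sum_comm' (t' := range n) (s' := fun i => Ico i n)
    fun p i => by simp only [mem_range, mem_Ico]; omega]
  refine sum_congr rfl fun m hm => ?_
  have hreflect : ∑ p ∈ Ico m n, 1 / ((n : ℝ) + 2 + m - (p + 1 : ℕ)) =
      mhs ![1] (n + 1) - mhs ![1] (m + 1) := by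
    have hmn : m < n := mem_range.1 hm
    rw [mhs_one_sub_mhs_one (by omega)]
    refine sum_nbij' (n + m - ·) (n + m - ·) (by grind) (by grind) (by grind) (by grind)
      fun p hp => ?_
    rw [mem_Ico] at hp
    rw [Nat.cast_sub (by omega)]
    push_cast
    ring
  rw [← hreflect, sum_div]
  exact sum_congr rfl fun p _ => by rw [div_div, mul_comm]

end HarmonicNumbers

section Telescoping

lemma hasSum_sub_shift {u : ℕ → ℝ} (hu : Antitone u) (h0 : Tendsto u atTop (𝓝 0)) (j : ℕ) :
    HasSum (fun i => u i - u (i + j)) (∑ i ∈ range j, u i) := by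
  rw [hasSum_iff_tendsto_nat_of_nonneg fun i => sub_nonneg.2 (hu (Nat.le_add_right i j))]
  have hpartial (n : ℕ) : ∑ i ∈ range n, (u i - u (i + j)) =
      ∑ i ∈ range j, u i - ∑ i ∈ range j, u (n + i) := by
    rw [sum_sub_distrib, sub_eq_sub_iff_add_eq_add, ← sum_range_add, add_comm n j, sum_range_add]
    simp_rw [add_comm j]
  simp_rw [hpartial]
  have htail : Tendsto (fun n => ∑ i ∈ range j, u (n + i)) atTop (𝓝 0) := by
    simpa using tendsto_finsetSum (range j) fun i _ => (tendsto_add_atTop_iff_nat i).2 h0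
  simpa using tendsto_const_nhds.sub htail

lemma tendsto_one_div_add_natCast (c : ℝ) :
    Tendsto (fun i : ℕ => 1 / (c + i)) atTop (𝓝 0) := by
  simp_rw [one_div]
  exact tendsto_inv_atTop_zero.comp
    (tendsto_atTop_add_const_left _ _ tendsto_natCast_atTop_atTop)

lemma antitone_one_div_add_natCast {c : ℝ} (hc : 0 < c) : Antitone fun i : ℕ => 1 / (c + i) := by
  intro i i' h
  dsimp only
  gcongr

lemma hasSum_one_div_sub_one_div {c : ℝ} (hc : 0 < c) (j : ℕ) :
    HasSum (fun i : ℕ => 1 / (c + i) - 1 / (c + i + j)) (∑ i ∈ range j, 1 / (c + i)) := by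
  simpa [add_assoc] using
    hasSum_sub_shift (antitone_one_div_add_natCast hc) (tendsto_one_div_add_natCast c) j

lemma hasSum_one_div_mul_sub_one_div_mul {c : ℝ} {j : ℕ} (hj : j < c) :
    HasSum (fun i : ℕ => 1 / ((c + i) * (c + i - j)) - 1 / ((c + i) * (c + i + j)))
      (∑ i ∈ range j, 1 / ((c + i) * (c + i - j))) := by
  have hu (i : ℕ) : 1 / ((c + i) * (c + i - j)) = 1 / (c + i) * (1 / (c - j + i)) := by
    rw [one_div_mul_one_div, sub_add_eq_add_sub]
  have : 0 < c := j.cast_nonneg.trans_lt hj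
  have : 0 < c - j := sub_pos.2 hj
  have hanti : Antitone fun i : ℕ => 1 / (c + i) * (1 / (c - j + i)) := fun i i' h => by
    dsimp only
    gcongr
  have hlim : Tendsto (fun i : ℕ => 1 / (c + i) * (1 / (c - j + i))) atTop (𝓝 0) := by
    simpa using (tendsto_one_div_add_natCast c).mul (tendsto_one_div_add_natCast (c - j))
  simp_rw [hu]
  convert hasSum_sub_shift hanti hlim j using 3 with i
  rw [one_div_mul_one_div, mul_comm]
  push_cast
  congr 2 <;> ring

lemma hasSum_one_div_mul_sq_sub_sq {x : ℝ} {a : ℕ} (ha : 0 < a) (hx : a < x + 1) :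
    HasSum (fun i : ℕ => 1 / ((x + 1 + i) * ((x + 1 + i) ^ 2 - (a : ℝ) ^ 2)))
      (1 / (2 * (a : ℝ) ^ 2) * ∑ p ∈ range a, (1 / (x - p) - 1 / (x + 1 + p))) := by
  have ha0 : (0 : ℝ) < a := by exact_mod_cast ha
  have hlow := hasSum_one_div_sub_one_div (sub_pos.2 hx) a
  have hhigh := hasSum_one_div_sub_one_div (ha0.trans hx) a
  have hreflect : ∑ i ∈ range a, 1 / (x + 1 - a + i) = ∑ p ∈ range a, 1 / (x - p) := by
    rw [← sum_range_reflect]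
    refine sum_congr rfl fun p hp => ?_
    have := mem_range.1 hp
    rw [show a - 1 - p = a - (p + 1) by omega, Nat.cast_sub (by omega)]
    push_cast
    congr 1
    ring
  rw [sum_sub_distrib, ← hreflect]
  refine ((hlow.sub hhigh).mul_left (1 / (2 * (a : ℝ) ^ 2))).congr_fun fun i => ?_
  have : (0 : ℝ) ≤ i := i.cast_nonneg
  set y := x + 1 + i
  have hy_sub : y - a ≠ 0 := by linarith
  have hy0 : y ≠ 0 := by linarith
  have hy_add : y + a ≠ 0 := by linarith
  rw [show x + 1 - a + i = y - a by linarith, sub_add_cancel, sq_sub_sq]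
  field_simp
  ring

end Telescoping

section Tail

/-- The tail `Σ_{k>m+1} 1/k²`, so that `Σ_{m≥0} invSqTail m/(m+1)^b = ζ(2,b)`. -/
noncomputable def invSqTail (m : ℕ) : ℝ := ∑' i : ℕ, 1 / ((m : ℝ) + 2 + i) ^ 2

lemma hasSum_invSqTail (m : ℕ) :
    HasSum (fun i : ℕ => 1 / ((m : ℝ) + 2 + i) ^ 2) (invSqTail m) := by
  refine Summable.hasSum ?_
  refine ((summable_nat_add_iff (m + 2)).2 <|
    Real.summable_one_div_nat_pow.2 one_lt_two).congr fun i => ?_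
  push_cast
  congr 2
  ring

lemma hasSum_mzv_two {b : ℕ} (hb : 1 ≤ b) :
    HasSum (fun m : ℕ => 1 / ((m : ℝ) + 1) ^ b * invSqTail m) (mzv ![2, b]) := by
  have hrow := hasSum_mzv_pair le_rfl hb
  simp_rw [mhs_singleton, mul_sum] at hrow
  refine (hasSum_sum_range_iff_of_nonneg
    (f := fun k m => 1 / ((k : ℝ) + 1) ^ 2 * (1 / ((m : ℝ) + 1) ^ b))
    (fun k m _ => by positivity) fun m => ?_).1 hrow
  refine ((hasSum_invSqTail m).mul_left (1 / ((m : ℝ) + 1) ^ b)).congr_fun fun i => ?_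
  push_cast
  ring_nf

lemma one_div_mul_sum_one_div_sub_one_div {y : ℝ} (n : ℕ) (hy : y ≠ 0) (hyn : y + (n + 1) ≠ 0) :
    1 / y * ∑ p ∈ range (n + 1), (1 / (y - p) - 1 / (y + 1 + p)) =
      1 / y ^ 2 + ∑ p ∈ range n, (1 / (y * (y - (p + 1 : ℕ))) - 1 / (y * (y + (p + 1 : ℕ)))) -
        1 / (n + 1) * (1 / y - 1 / (y + (n + 1))) := by
  have hlast : 1 / (n + 1) * (1 / y - 1 / (y + (n + 1))) = 1 / y * (1 / (y + 1 + n)) := by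
    rw [show y + 1 + n = y + (n + 1) by ring]
    field_simp
    ring
  rw [hlast, sum_sub_distrib, sum_sub_distrib, sum_range_succ',
    sum_range_succ fun p : ℕ => 1 / (y + 1 + p)]
  simp_rw [← one_div_mul_one_div, ← mul_sum]
  push_cast
  simp_rw [show ∀ p : ℕ, y + ((p : ℝ) + 1) = y + 1 + p from fun p => by ring]
  ring

lemma hasSum_one_div_mul_sum_one_div_sub_one_div (m : ℕ) :
    HasSum (fun j : ℕ => 1 / ((m : ℝ) + 2 + j) *
        ∑ p ∈ range (m + 1), (1 / ((m : ℝ) + 2 + j - p) - 1 / ((m : ℝ) + 2 + j + 1 + p)))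
      (invSqTail m + ∑ p ∈ range m, (mhs ![1] (m + 1) - mhs ![1] (p + 1)) / ((m : ℝ) + 2 + p) -
        1 / ((m : ℝ) + 1) * ∑ i ∈ range (m + 1), 1 / ((m : ℝ) + 2 + i)) := by
  have hmid := hasSum_sum (s := range m) fun p hp =>
    hasSum_one_div_mul_sub_one_div_mul (c := (m : ℝ) + 2) (j := p + 1) <| by
      have : (p : ℝ) < m := by exact_mod_cast mem_range.1 hp
      push_cast
      linarith
  have hlast := hasSum_one_div_sub_one_div (c := (m : ℝ) + 2) (by positivity) (m + 1)
  rw [← sum_sum_one_div_mul_add_sub]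
  refine (((hasSum_invSqTail m).add hmid).sub
    (hlast.mul_left (1 / ((m : ℝ) + 1)))).congr_fun fun j => ?_
  rw [one_div_mul_sum_one_div_sub_one_div m (by positivity) (by positivity)]
  push_cast
  rfl

lemma sum_mhs_one_succ_sub_div_add_sub (m : ℕ) :
    ∑ p ∈ range m, (mhs ![1] (m + 1) - mhs ![1] (p + 1)) / ((m : ℝ) + 2 + p) -
        1 / ((m : ℝ) + 1) * ∑ i ∈ range (m + 1), 1 / ((m : ℝ) + 2 + i) =
      ∑ p ∈ range m, (mhs ![1] m - mhs ![1] (p + 1)) / ((m : ℝ) + 2 + p) -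
        1 / (2 * ((m : ℝ) + 1) ^ 2) := by
  have hsplit : ∑ p ∈ range m, (mhs ![1] (m + 1) - mhs ![1] (p + 1)) / ((m : ℝ) + 2 + p) =
      ∑ p ∈ range m, (mhs ![1] m - mhs ![1] (p + 1)) / ((m : ℝ) + 2 + p) +
        1 / ((m : ℝ) + 1) * ∑ p ∈ range m, 1 / ((m : ℝ) + 2 + p) := by
    rw [mul_sum, ← sum_add_distrib]
    refine sum_congr rfl fun p _ => ?_
    rw [mhs_singleton_succ 1 m]
    ring
  rw [hsplit, sum_range_succ, show (m : ℝ) + 2 + m = 2 * (m + 1) by ring]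
  field_simp
  ring

end Tail

section Kernel

/-- The sum `Σ_{k+1>l>m+1} 1/((k+1)l((k+1)²-(m+1)²))`. Both indices are shifted by one, so that
they start at zero like those of `mhs`. -/
noncomputable def harmonicKernel (k m : ℕ) : ℝ :=
  (mhs ![1] k - mhs ![1] (m + 1)) / (((k : ℝ) + 1) * (((k : ℝ) + 1) ^ 2 - ((m : ℝ) + 1) ^ 2))

lemma harmonicKernel_nonneg {k m : ℕ} (h : m < k) : 0 ≤ harmonicKernel k m := by
  have hmk : (m : ℝ) < k := by exact_mod_cast h
  refine div_nonneg (sub_nonneg.2 (mhs_singleton_monotone 1 h)) ?_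
  exact mul_nonneg (by positivity) (sub_nonneg.2 (by gcongr))

lemma two_mul_sq_mul_harmonicKernel {k m : ℕ} (h : m < k) :
    2 * ((k : ℝ) + 1) ^ 2 * harmonicKernel k m =
      (mhs ![1] k - mhs ![1] (m + 1)) / ((k : ℝ) - m) +
        (mhs ![1] k - mhs ![1] (m + 1)) / ((k : ℝ) + 2 + m) := by
  have hsub : (k : ℝ) - m ≠ 0 := sub_ne_zero.2 (by exact_mod_cast h.ne')
  have hfactor : ((k : ℝ) + 1) ^ 2 - ((m : ℝ) + 1) ^ 2 = (k - m) * (k + 2 + m) := by ring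
  rw [harmonicKernel, hfactor]
  field_simp
  ring

lemma two_mul_sq_mul_sum_harmonicKernel (k : ℕ) :
    2 * ((k : ℝ) + 1) ^ 2 * ∑ m ∈ range k, harmonicKernel k m =
      mhs ![2] k - 2 * mhs ![1] k / (k + 1) +
        ∑ m ∈ range k, (mhs ![1] k - mhs ![1] (m + 1)) / ((k : ℝ) + 2 + m) := by
  rw [← sum_mhs_one_sub_div_sub, ← sum_add_distrib, mul_sum]
  exact sum_congr rfl fun m hm => two_mul_sq_mul_harmonicKernel (mem_range.1 hm)

lemma sum_harmonicKernel_le (k : ℕ) :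
    ∑ m ∈ range k, harmonicKernel k m ≤ 1 / ((k : ℝ) + 1) ^ 2 * mhs ![2] k := by
  have hterm : ∀ m ∈ range k, harmonicKernel k m ≤
      1 / ((k : ℝ) + 1) ^ 2 * ((mhs ![1] k - mhs ![1] (m + 1)) / ((k : ℝ) - m)) := by
    intro m hm
    have hmk : m < k := mem_range.1 hm
    have hmk' : (0 : ℝ) < k - m := sub_pos.2 (by exact_mod_cast hmk)
    have hH : 0 ≤ mhs ![1] k - mhs ![1] (m + 1) := sub_nonneg.2 (mhs_singleton_monotone 1 hmk)
    have hle : (mhs ![1] k - mhs ![1] (m + 1)) / ((k : ℝ) + 2 + m) ≤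
        (mhs ![1] k - mhs ![1] (m + 1)) / ((k : ℝ) - m) := by
      gcongr
      linarith
    rw [one_div_mul_eq_div, le_div_iff₀ (by positivity)]
    linarith [two_mul_sq_mul_harmonicKernel hmk]
  have hH : 0 ≤ mhs ![1] k := mhs_nonneg _ k
  calc ∑ m ∈ range k, harmonicKernel k m
      ≤ 1 / ((k : ℝ) + 1) ^ 2 * (mhs ![2] k - 2 * mhs ![1] k / (k + 1)) := by
        rw [← sum_mhs_one_sub_div_sub, mul_sum]
        exact sum_le_sum hterm
    _ ≤ 1 / ((k : ℝ) + 1) ^ 2 * mhs ![2] k := by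
        gcongr
        exact sub_le_self _ (by positivity)

lemma harmonicKernel_add (m i : ℕ) :
    harmonicKernel (m + 1 + i) m = ∑ j ∈ range i, 1 / ((m : ℝ) + 2 + j) *
      (1 / (((m : ℝ) + 2 + i) * (((m : ℝ) + 2 + i) ^ 2 - ((m : ℝ) + 1) ^ 2))) := by
  rw [harmonicKernel, mhs_one_sub_mhs_one (Nat.le_add_right _ _), sum_Ico_eq_sum_range,
    Nat.add_sub_cancel_left, ← sum_mul, mul_one_div]
  push_cast
  ring_nf

lemma hasSum_harmonicKernel (m : ℕ) :
    HasSum (fun i => harmonicKernel (m + 1 + i) m)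
      (1 / (2 * ((m : ℝ) + 1) ^ 2) *
        (invSqTail m + ∑ p ∈ range m, (mhs ![1] m - mhs ![1] (p + 1)) / ((m : ℝ) + 2 + p) -
          1 / (2 * ((m : ℝ) + 1) ^ 2))) := by
  have hnonneg : ∀ i : ℕ, ∀ j < i, 0 ≤ 1 / ((m : ℝ) + 2 + j) *
      (1 / (((m : ℝ) + 2 + i) * (((m : ℝ) + 2 + i) ^ 2 - ((m : ℝ) + 1) ^ 2))) := by
    intro i j _
    have : 0 ≤ ((m : ℝ) + 2 + i) ^ 2 - ((m : ℝ) + 1) ^ 2 :=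
      sub_nonneg.2 (pow_le_pow_left₀ (by positivity) (by linarith [i.cast_nonneg (α := ℝ)]) 2)
    positivity
  have hinner (j : ℕ) : HasSum (fun i : ℕ => 1 / ((m : ℝ) + 2 + j) *
      (1 / (((m : ℝ) + 2 + (j + 1 + i : ℕ)) *
        (((m : ℝ) + 2 + (j + 1 + i : ℕ)) ^ 2 - ((m : ℝ) + 1) ^ 2))))
      (1 / (2 * ((m : ℝ) + 1) ^ 2) * (1 / ((m : ℝ) + 2 + j) *
        ∑ p ∈ range (m + 1), (1 / ((m : ℝ) + 2 + j - p) - 1 / ((m : ℝ) + 2 + j + 1 + p)))) := by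
    have hlt : ((m + 1 : ℕ) : ℝ) < (m : ℝ) + 2 + j + 1 := by
      push_cast
      linarith [j.cast_nonneg (α := ℝ)]
    have hsum := (hasSum_one_div_mul_sq_sub_sq m.succ_pos hlt).mul_left (1 / ((m : ℝ) + 2 + j))
    rw [mul_left_comm, Nat.succ_eq_add_one, Nat.cast_succ] at hsum
    simpa only [add_assoc, Nat.cast_add, Nat.cast_one] using hsum
  have houter := (hasSum_one_div_mul_sum_one_div_sub_one_div m).mul_left
    (1 / (2 * ((m : ℝ) + 1) ^ 2))
  rw [add_sub_assoc, sum_mhs_one_succ_sub_div_add_sub, ← add_sub_assoc] at houter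
  simp_rw [harmonicKernel_add]
  exact (hasSum_sum_range_iff_of_nonneg hnonneg hinner).2 houter

lemma hasSum_harmonicKernel_eq_sum_add (m : ℕ) :
    HasSum (fun i => harmonicKernel (m + 1 + i) m)
      (∑ p ∈ range m, harmonicKernel m p + 1 / ((m : ℝ) + 1) ^ 3 * mhs ![1] m +
        1 / 2 * (1 / ((m : ℝ) + 1) ^ 2 * invSqTail m - 1 / ((m : ℝ) + 1) ^ 2 * mhs ![2] m) -
        1 / 4 * (1 / ((m : ℝ) + 1) ^ 4)) := by
  convert hasSum_harmonicKernel m using 1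
  rw [← sub_eq_iff_eq_add'.2 (two_mul_sq_mul_sum_harmonicKernel m)]
  field_simp
  ring

lemma sum_one_div_pow_mul_one_div_pow {K : Type*} [Field K] {a b : K} (ha : a ≠ 0) (hb : b ≠ 0)
    (hab : a ^ 2 ≠ b ^ 2) (n : ℕ) :
    ∑ i ∈ range n, 1 / a ^ (2 * i + 3) * (1 / b ^ (2 * n - 2 * i)) =
      (1 / b ^ (2 * n) - 1 / a ^ (2 * n)) / (a * (a ^ 2 - b ^ 2)) := by
  have hab' : a ^ 2 - b ^ 2 ≠ 0 := sub_ne_zero.2 hab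
  induction n with
  | zero => simp
  | succ n ih =>
    have hstep : ∑ i ∈ range n, 1 / a ^ (2 * i + 3) * (1 / b ^ (2 * (n + 1) - 2 * i)) =
        1 / b ^ 2 * ∑ i ∈ range n, 1 / a ^ (2 * i + 3) * (1 / b ^ (2 * n - 2 * i)) := by
      rw [mul_sum]
      refine sum_congr rfl fun i hi => ?_
      have := mem_range.1 hi
      rw [show 2 * (n + 1) - 2 * i = 2 * n - 2 * i + 2 by omega, pow_add]
      ring
    rw [sum_range_succ, hstep, ih, show 2 * (n + 1) - 2 * n = 2 by omega]
    field_simp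
    ring

lemma sum_mul_mhs_one_cons (n k : ℕ) :
    ∑ i ∈ range n, 1 / ((k : ℝ) + 1) ^ (2 * i + 3) * mhs ![1, 2 * n - 2 * i] k =
      ∑ m ∈ range k,
        (1 / ((m : ℝ) + 1) ^ (2 * n) - 1 / ((k : ℝ) + 1) ^ (2 * n)) * harmonicKernel k m := by
  have hmhs (i : ℕ) : mhs ![1, 2 * n - 2 * i] k =
      ∑ m ∈ range k, 1 / ((m : ℝ) + 1) ^ (2 * n - 2 * i) * (mhs ![1] k - mhs ![1] (m + 1)) := by
    simp_rw [mhs_vecCons, mhs_vecEmpty, mul_one]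
    exact sum_range_mul_sum_range _ _ k
  simp_rw [hmhs, mul_sum]
  rw [sum_comm]
  refine sum_congr rfl fun m hm => ?_
  have hmk : (m : ℝ) + 1 < k + 1 := by exact_mod_cast Nat.succ_lt_succ (mem_range.1 hm)
  have hsq : ((m : ℝ) + 1) ^ 2 < (k + 1) ^ 2 := by gcongr
  simp_rw [← mul_assoc]
  rw [← sum_mul, sum_one_div_pow_mul_one_div_pow (by positivity) (by positivity) hsq.ne',
    harmonicKernel]
  ring

end Kernel

section OddEven

lemma summable_one_div_pow_mul_sum_harmonicKernel (n : ℕ) :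
    Summable fun k : ℕ => 1 / ((k : ℝ) + 1) ^ n * ∑ m ∈ range k, harmonicKernel k m := by
  have hrow (k : ℕ) : 0 ≤ ∑ m ∈ range k, harmonicKernel k m :=
    sum_nonneg fun m hm => harmonicKernel_nonneg (mem_range.1 hm)
  refine .of_nonneg_of_le (fun k => mul_nonneg (by positivity) (hrow k)) (fun k => ?_)
    (summable_mul_mhs_singleton le_rfl one_le_two)
  have hle_one : 1 / ((k : ℝ) + 1) ^ n ≤ 1 :=
    (div_le_one (by positivity)).2 (one_le_pow₀ (by simp))
  exact (mul_le_of_le_one_left (hrow k) hle_one).trans (sum_harmonicKernel_le k)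

lemma hasSum_sum_one_div_pow_mul_harmonicKernel (n : ℕ) :
    HasSum (fun k : ℕ => ∑ m ∈ range k, 1 / ((m : ℝ) + 1) ^ (2 * n) * harmonicKernel k m)
      (∑' k : ℕ, 1 / ((k : ℝ) + 1) ^ (2 * n) * ∑ m ∈ range k, harmonicKernel k m +
        (mzv ![2 * n + 3, 1] + 1 / 2 * (mzv ![2, 2 * n + 2] - mzv ![2 * n + 2, 2]) -
          1 / 4 * mzv ![2 * n + 4])) := by
  have hrow := (summable_one_div_pow_mul_sum_harmonicKernel (2 * n)).hasSum
  have h31 := hasSum_mzv_pair (a := 2 * n + 3) (b := 1) (by omega) le_rfl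
  have h2 := hasSum_mzv_two (b := 2 * n + 2) (by omega)
  have h22 := hasSum_mzv_pair (a := 2 * n + 2) (b := 2) (by omega) one_le_two
  have h4 := hasSum_mzv_singleton (a := 2 * n + 4) (by omega)
  have htotal := hrow.add ((h31.add ((h2.sub h22).mul_left (1 / 2))).sub (h4.mul_left (1 / 4)))
  have hcolumn (m : ℕ) :=
    (hasSum_harmonicKernel_eq_sum_add m).mul_left (1 / ((m : ℝ) + 1) ^ (2 * n))
  have hnonneg : ∀ k : ℕ, ∀ m < k, 0 ≤ 1 / ((m : ℝ) + 1) ^ (2 * n) * harmonicKernel k m :=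
    fun k m hmk => mul_nonneg (by positivity) (harmonicKernel_nonneg hmk)
  refine (hasSum_sum_range_iff_of_nonneg hnonneg hcolumn).2 (htotal.congr_fun fun m => ?_)
  simp only [pow_add, ← one_div_mul_one_div]
  ring

lemma hasSum_sum_mul_mhs_one_cons (n : ℕ) :
    HasSum (fun k : ℕ =>
        ∑ i ∈ range n, 1 / ((k : ℝ) + 1) ^ (2 * i + 3) * mhs ![1, 2 * n - 2 * i] k)
      (mzv ![2 * n + 3, 1] + 1 / 2 * (mzv ![2, 2 * n + 2] - mzv ![2 * n + 2, 2]) -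
        1 / 4 * mzv ![2 * n + 4]) := by
  have hsub := (hasSum_sum_one_div_pow_mul_harmonicKernel n).sub
    (summable_one_div_pow_mul_sum_harmonicKernel (2 * n)).hasSum
  rw [add_sub_cancel_left] at hsub
  refine hsub.congr_fun fun k => ?_
  rw [sum_mul_mhs_one_cons, mul_sum, ← sum_sub_distrib]
  exact sum_congr rfl fun m _ => sub_mul _ _ _

lemma sum_mzv_odd_one_even (n : ℕ) :
    ∑ i ∈ range n, mzv ![2 * i + 3, 1, 2 * n - 2 * i] =
      mzv ![2 * n + 3, 1] + 1 / 2 * (mzv ![2, 2 * n + 2] - mzv ![2 * n + 2, 2]) -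
        1 / 4 * mzv ![2 * n + 4] := by
  have htotal := hasSum_sum_mul_mhs_one_cons n
  have hnonneg (i k : ℕ) : 0 ≤ 1 / ((k : ℝ) + 1) ^ (2 * i + 3) * mhs ![1, 2 * n - 2 * i] k :=
    mul_nonneg (by positivity) (mhs_nonneg _ k)
  have hsummable : ∀ i ∈ range n,
      Summable fun k : ℕ => 1 / ((k : ℝ) + 1) ^ (2 * i + 3) * mhs ![1, 2 * n - 2 * i] k :=
    fun i hi => .of_nonneg_of_le (hnonneg i)
      (fun k => single_le_sum (f := fun i => 1 / ((k : ℝ) + 1) ^ (2 * i + 3) * mhs _ k)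
        (fun i _ => hnonneg i k) hi) htotal.summable
  rw [sum_congr rfl fun i _ => mzv_vecCons (2 * i + 3) _, ← Summable.tsum_finsetSum hsummable,
    htotal.tsum_eq]

end OddEven

lemma sum_filter_odd_Icc {M : Type*} [AddCommMonoid M] (f : ℕ → M) (n : ℕ) :
    ∑ a ∈ Icc 2 (2 * n + 2) with Odd a, f a = ∑ i ∈ range n, f (2 * i + 3) := by
  symm
  refine sum_bij (fun i _ => 2 * i + 3) (fun i hi => ?_) (fun i _ j _ h => by omega)
    (fun a ha => ?_) fun _ _ => rfl
  · rw [mem_range] at hi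
    exact mem_filter.2 ⟨mem_Icc.2 (by omega), i + 1, by ring⟩
  · obtain ⟨hIcc, r, rfl⟩ := mem_filter.1 ha
    rw [mem_Icc] at hIcc
    exact ⟨r - 1, mem_range.2 (by omega), by omega⟩

theorem sum_a1c_a_odd (w : ℕ) (hw : 4 ≤ w) (hew : Even w) :
    (∑ a ∈ (Finset.Icc 2 (w - 2)).filter (fun a => Odd a), mzv ![a, 1, w - 1 - a])
    = mzv ![w - 1, 1] + (1 / 2) * (mzv ![2, w - 2] - mzv ![w - 2, 2]) - (1 / 4) * mzv ![w] := by
  obtain ⟨n, rfl⟩ : ∃ n, w = 2 * n + 4 := by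
    obtain ⟨r, rfl⟩ := hew
    exact ⟨r - 2, by omega⟩
  rw [show 2 * n + 4 - 1 = 2 * n + 3 by omega, show 2 * n + 4 - 2 = 2 * n + 2 by omega,
    sum_filter_odd_Icc, ← sum_mzv_odd_one_even]
  refine sum_congr rfl fun i _ => ?_
  rw [show 2 * n + 3 - (2 * i + 3) = 2 * n - 2 * i by omega]
end

section
/- Let w ≥ 4 be an even integer. Then Σ_{a+b+c=w, a≥2, b≥1, c≥1} ((−1)^c − (−1)^a)·ζ(a,b,c) = (1/2)·ζ(w) − ζ(2)·ζ(w−2). -/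
/-! Put `p = w - 2`, `f n = 1 / n ^ p` and `R m n = (f m - f n) / (n ^ 2 - m ^ 2)`. For fixed
`k > l > m`, the terms indexed by `k, l, m` in the multiple zeta values of the weighted sum form a
double geometric sum: their total is `-2 * (l * R l k / (k + m) + l * m * R m l / (k * (k + m)))`.
Summing the first part over `m` and the second part over `k` leaves a sum over pairs `n > q` of
`-2 * (f q - f n) * g n q`, where `g ≥ 0` is a combination of harmonic numbers that does not depend
on `w`. There `f n` has the coefficient `-2 * (∑_{r > n} g r n - ∑_{q < n} g n q)`. Both inner sums
are explicit, the harmonic numbers in them are the same, and their difference is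
`ζ(2) / 2 - 1 / (4 * n ^ 2)`. Multiplying by `f n` and summing over `n` gives the theorem. -/

open Finset Filter Topology

local notation "ℋ" n:max => ((harmonic n : ℚ) : ℝ)

/-- The generalized harmonic number `∑_{k=1}^n 1/k²` of order two. -/
noncomputable def harmonicSq (n : ℕ) : ℝ := ∑ i ∈ range n, 1 / ((i : ℝ) + 1) ^ 2

section Harmonic

lemma harmonic_succ_real (n : ℕ) : ℋ(n + 1) = ℋ n + 1 / ((n : ℝ) + 1) := by
  rw [harmonic_succ]
  push_cast
  rw [one_div]

lemma harmonicSq_succ (n : ℕ) : harmonicSq (n + 1) = harmonicSq n + 1 / ((n : ℝ) + 1) ^ 2 :=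
  sum_range_succ _ n

lemma sum_range_one_div_add_succ (n m : ℕ) :
    ∑ i ∈ range m, 1 / ((n : ℝ) + i + 1) = ℋ(n + m) - ℋ n := by
  induction m with
  | zero => simp
  | succ m ih =>
    rw [sum_range_succ, ih, ← add_assoc, harmonic_succ_real]
    push_cast
    ring

lemma sum_range_one_div_succ (n : ℕ) : ∑ i ∈ range n, 1 / ((i : ℝ) + 1) = ℋ n := by
  simpa using sum_range_one_div_add_succ 0 n

lemma one_le_harmonic {n : ℕ} (hn : 0 < n) : 1 ≤ ℋ n := by
  rw [← sum_range_one_div_succ]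
  simpa using single_le_sum (f := fun i : ℕ ↦ 1 / ((i : ℝ) + 1)) (fun i _ ↦ by positivity)
    (mem_range.2 hn)

lemma harmonicSq_nonneg (n : ℕ) : 0 ≤ harmonicSq n :=
  sum_nonneg fun _ _ ↦ by positivity

lemma sum_range_one_div_sub (n : ℕ) : ∑ i ∈ range n, 1 / ((n : ℝ) - i) = ℋ n := by
  rw [← sum_range_reflect, ← sum_range_one_div_succ]
  refine sum_congr rfl fun i hi ↦ ?_
  rw [mem_range] at hi
  rw [Nat.sub_sub, Nat.cast_sub (by omega)]
  push_cast
  ring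

lemma sum_range_one_div_succ_mul_sub (n : ℕ) :
    ∑ i ∈ range n, 1 / (((i : ℝ) + 1) * (n - i)) = 2 * ℋ n / (n + 1) := by
  have partial_fraction : ∀ i ∈ range n, 1 / (((i : ℝ) + 1) * (n - i)) =
      (1 / ((i : ℝ) + 1) + 1 / ((n : ℝ) - i)) / (n + 1) := by
    intro i hi
    have hlt : (i : ℝ) < n := by exact_mod_cast mem_range.1 hi
    have : (n : ℝ) - i ≠ 0 := by linarith
    field_simp
    ring
  rw [sum_congr rfl partial_fraction, ← sum_div, sum_add_distrib, sum_range_one_div_succ,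
    sum_range_one_div_sub]
  ring

lemma sum_range_harmonic_succ_div_succ (n : ℕ) :
    ∑ i ∈ range n, ℋ(i + 1) / ((i : ℝ) + 1) = (ℋ n ^ 2 + harmonicSq n) / 2 := by
  induction n with
  | zero => simp [harmonicSq]
  | succ n ih =>
    rw [sum_range_succ, ih, harmonic_succ_real, harmonicSq_succ]
    field

lemma sum_range_harmonic_div_sub (n : ℕ) :
    ∑ i ∈ range n, ℋ i / ((n : ℝ) - i) = ℋ n ^ 2 - harmonicSq n := by
  induction n with
  | zero => simp [harmonicSq]
  | succ n ih =>
    have shift : ∑ i ∈ range (n + 1), ℋ i / (((n + 1 : ℕ) : ℝ) - i) =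
        ∑ i ∈ range n, (ℋ i / ((n : ℝ) - i) + 1 / (((i : ℝ) + 1) * (n - i))) := by
      rw [sum_range_succ', harmonic_zero, Rat.cast_zero, zero_div, add_zero]
      refine sum_congr rfl fun i hi ↦ ?_
      have hlt : (i : ℝ) < n := by exact_mod_cast mem_range.1 hi
      have : (n : ℝ) - i ≠ 0 := by linarith
      rw [harmonic_succ_real]
      push_cast
      rw [add_sub_add_right_eq_sub]
      field_simp
    rw [shift, sum_add_distrib, ih, sum_range_one_div_succ_mul_sub, harmonic_succ_real,
      harmonicSq_succ]
    field

lemma sum_range_sum_range_reflect {M : Type*} [AddCommMonoid M] (F : ℕ → ℕ → M) (n : ℕ) :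
    ∑ q ∈ range n, ∑ i ∈ range q, F q i =
      ∑ q ∈ range n, ∑ i ∈ range q, F (n - 1 - i) (n - 1 - q) := by
  rw [sum_sigma', sum_sigma']
  refine sum_nbij' (fun x ↦ ⟨n - 1 - x.2, n - 1 - x.1⟩) (fun x ↦ ⟨n - 1 - x.2, n - 1 - x.1⟩)
    ?_ ?_ ?_ ?_ ?_ <;> rintro ⟨q, i⟩ h <;> simp only [mem_sigma, mem_range] at h ⊢
  · omega
  · omega
  · congr <;> omega
  · congr <;> omega
  · congr <;> omega

lemma sum_range_harmonic_div_two_mul_sub (n : ℕ) :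
    ∑ q ∈ range n, ℋ q / (2 * (n : ℝ) - q) =
      ∑ q ∈ range n, (ℋ(n + q) - ℋ n) / ((n : ℝ) - q) := by
  simp only [← sum_range_one_div_add_succ]
  simp only [← sum_range_one_div_succ, sum_div]
  rw [sum_range_sum_range_reflect]
  refine sum_congr rfl fun q hq ↦ sum_congr rfl fun i hi ↦ ?_
  rw [mem_range] at hq hi
  rw [Nat.sub_sub, Nat.sub_sub, Nat.cast_sub (by omega), Nat.cast_sub (by omega)]
  push_cast
  rw [div_div, div_div]
  ring

lemma sum_range_harmonic_sub_div_sub (n : ℕ) :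
    ∑ q ∈ range n, (ℋ(n + q) - ℋ n) / ((n : ℝ) - q) =
      (ℋ(2 * n) ^ 2 - harmonicSq (2 * n) - ℋ n ^ 2) / 2 := by
  set S := ∑ q ∈ range n, (ℋ(n + q) - ℋ n) / ((n : ℝ) - q) with hS
  have upper_half : ∑ q ∈ range n, ℋ(n + q) / ((n : ℝ) - q) = S + ℋ n ^ 2 := by
    simp only [hS, sub_div, sum_sub_distrib]
    simp only [div_eq_mul_one_div (ℋ n), ← mul_sum, sum_range_one_div_sub]
    ring
  have split : ∑ q ∈ range (2 * n), ℋ q / (((2 * n : ℕ) : ℝ) - q) = S + (S + ℋ n ^ 2) := by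
    rw [two_mul, sum_range_add, ← upper_half, hS, ← sum_range_harmonic_div_two_mul_sub]
    push_cast
    congr 1 <;> refine sum_congr rfl fun q _ ↦ ?_ <;> ring
  linarith [split.symm.trans (sum_range_harmonic_div_sub (2 * n))]

end Harmonic

lemma hasSum_sigma_of_nonneg {β : Type*} {γ : β → Type*} {F : (Σ b, γ b) → ℝ} {G : β → ℝ} {a : ℝ}
    (hF : ∀ x, 0 ≤ F x) (hG : ∀ b, HasSum (fun c ↦ F ⟨b, c⟩) (G b)) (ha : HasSum G a) :
    HasSum F a := by
  have hsum : Summable F := (summable_sigma_of_nonneg hF).2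
    ⟨fun b ↦ (hG b).summable, by simpa only [(hG _).tsum_eq] using ha.summable⟩
  rw [ha.unique (hsum.hasSum.sigma hG)]
  exact hsum.hasSum

/-- The index set of the multiple zeta series of depth `d`, in the form in which `mzv` sums over it:
decreasing `d`-tuples `k₁ > ⋯ > k_d` of positive integers. -/
abbrev MZVIndex (d : ℕ) := {k : Fin d → ℕ // StrictAnti k ∧ ∀ i, 0 < k i}

section Index

lemma strictAnti_fin_cons {d : ℕ} {k : Fin (d + 1) → ℕ} (hk : StrictAnti k) {n : ℕ} (hn : k 0 < n) :
    StrictAnti (Fin.cons n k : Fin (d + 2) → ℕ) := by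
  rw [Fin.strictAnti_iff_succ_lt]
  refine Fin.cases ?_ fun i ↦ ?_
  · simpa using hn
  · simpa using hk i.castSucc_lt_succ

lemma strictAnti_fin_snoc {d : ℕ} {k : Fin (d + 1) → ℕ} (hk : StrictAnti k) {n : ℕ}
    (hn : n < k (Fin.last d)) : StrictAnti (Fin.snoc k n : Fin (d + 2) → ℕ) := by
  rw [Fin.strictAnti_iff_succ_lt]
  refine Fin.lastCases ?_ fun i ↦ ?_
  · simpa using hn
  · rw [Fin.succ_castSucc, Fin.snoc_castSucc, Fin.snoc_castSucc]
    exact hk i.castSucc_lt_succ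

/-- Prepending a new largest entry to a tuple. The new entry is encoded by the number of integers
strictly between it and the old largest entry, so that it ranges over all of `ℕ`. -/
def mzvIndexConsEquiv (d : ℕ) : (Σ _ : MZVIndex (d + 1), ℕ) ≃ MZVIndex (d + 2) where
  toFun p := ⟨Fin.cons (p.1.1 0 + 1 + p.2) p.1.1, strictAnti_fin_cons p.1.2.1 (by omega),
    Fin.cases (by simp) p.1.2.2⟩
  invFun k := ⟨⟨Fin.tail k.1, k.2.1.comp_strictMono (Fin.strictMono_succ), fun i ↦ k.2.2 i.succ⟩,
    k.1 0 - (k.1 1 + 1)⟩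
  left_inv p := by
    change (⟨p.1, p.1.1 0 + 1 + p.2 - (p.1.1 0 + 1)⟩ : Σ _ : MZVIndex (d + 1), ℕ) = p
    rw [Nat.add_sub_cancel_left]
  right_inv k := by
    refine Subtype.ext ?_
    change (Fin.cons (k.1 1 + 1 + (k.1 0 - (k.1 1 + 1))) (Fin.tail k.1) : Fin (d + 2) → ℕ) = k.1
    rw [Nat.add_sub_cancel' (k.2.1 Fin.zero_lt_one), Fin.cons_self_tail]

/-- Appending a new smallest entry to a tuple. -/
def mzvIndexSnocEquiv (d : ℕ) :
    (Σ p : MZVIndex (d + 1), Ico 1 (p.1 (Fin.last d))) ≃ MZVIndex (d + 2) where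
  toFun p := ⟨Fin.snoc p.1.1 p.2.1, strictAnti_fin_snoc p.1.2.1 (mem_Ico.1 p.2.2).2,
    Fin.lastCases (by simpa using Nat.succ_le_iff.1 (mem_Ico.1 p.2.2).1)
      fun i ↦ by simpa using p.1.2.2 i⟩
  invFun k := ⟨⟨Fin.init k.1, k.2.1.comp_strictMono (Fin.strictMono_castSucc),
      fun i ↦ k.2.2 i.castSucc⟩,
    ⟨k.1 (Fin.last _), mem_Ico.2 ⟨k.2.2 _, k.2.1 (Fin.castSucc_lt_last _)⟩⟩⟩
  left_inv p := by
    refine Sigma.subtype_ext (Subtype.ext (Fin.init_snoc (α := fun _ ↦ ℕ) _ _)) ?_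
    exact Fin.snoc_last (α := fun _ ↦ ℕ) _ _
  right_inv k := Subtype.ext (Fin.snoc_init_self k.1)

variable {d : ℕ} {F : (Fin (d + 2) → ℕ) → ℝ} {G : (Fin (d + 1) → ℕ) → ℝ} {a : ℝ}

lemma hasSum_mzvIndex_of_cons (hF : ∀ k : MZVIndex (d + 2), 0 ≤ F k.1)
    (hG : ∀ p : MZVIndex (d + 1),
      HasSum (fun i ↦ F (Fin.cons (p.1 0 + 1 + i) p.1)) (G p.1))
    (ha : HasSum (fun p : MZVIndex (d + 1) ↦ G p.1) a) :
    HasSum (fun k : MZVIndex (d + 2) ↦ F k.1) a :=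
  (mzvIndexConsEquiv d).hasSum_iff.1 (hasSum_sigma_of_nonneg (fun _ ↦ hF _) hG ha)

lemma hasSum_mzvIndex_of_snoc (hF : ∀ k : MZVIndex (d + 2), 0 ≤ F k.1)
    (hG : ∀ p : MZVIndex (d + 1),
      ∑ m ∈ Ico 1 (p.1 (Fin.last d)), F (Fin.snoc p.1 m) = G p.1)
    (ha : HasSum (fun p : MZVIndex (d + 1) ↦ G p.1) a) :
    HasSum (fun k : MZVIndex (d + 2) ↦ F k.1) a := by
  refine (mzvIndexSnocEquiv d).hasSum_iff.1 (hasSum_sigma_of_nonneg (fun _ ↦ hF _) (fun p ↦ ?_) ha)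
  rw [← hG p]
  exact Finset.hasSum _ fun m ↦ F (Fin.snoc p.1 m)

lemma hasSum_mzvIndex_one_iff {f : ℕ → ℝ} :
    HasSum (fun k : MZVIndex 1 ↦ f (k.1 0)) a ↔ HasSum (fun n ↦ f (n + 1)) a := by
  let e : ℕ ≃ MZVIndex 1 :=
    { toFun n := ⟨fun _ ↦ n + 1, Subsingleton.strictAnti _, fun _ ↦ n.succ_pos⟩
      invFun k := k.1 0 - 1
      left_inv _ := Nat.add_sub_cancel ..
      right_inv k := Subtype.ext (funext fun i ↦ by
        rw [Fin.fin_one_eq_zero i]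
        exact Nat.sub_add_cancel (k.2.2 0)) }
  exact e.hasSum_iff.symm

end Index

section Convergence

lemma summable_prod_of_summable_of_nonneg {ι κ : Type*} [Fintype ι] {f : κ → ℝ}
    (hf : Summable f) (hf0 : ∀ k, 0 ≤ f k) : Summable fun k : ι → κ ↦ ∏ i, f (k i) := by
  classical
  have prod_apply_nonneg (k : ι → κ) : 0 ≤ ∏ i, f (k i) := prod_nonneg fun i _ ↦ hf0 _
  refine summable_of_sum_le (c := ∏ _i : ι, ∑' k, f k) prod_apply_nonneg fun s ↦ ?_
  let t : Finset κ := s.biUnion fun k ↦ univ.image k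
  calc ∑ k ∈ s, ∏ i, f (k i)
      ≤ ∑ k ∈ Fintype.piFinset fun _ : ι ↦ t, ∏ i, f (k i) := by
        refine sum_le_sum_of_subset_of_nonneg (fun k hk ↦ ?_) fun k _ _ ↦ prod_apply_nonneg k
        exact Fintype.mem_piFinset.2 fun i ↦
          mem_biUnion.2 ⟨k, hk, mem_image_of_mem k (mem_univ i)⟩
    _ = ∏ _i : ι, ∑ k ∈ t, f k := (prod_univ_sum _ _).symm
    _ ≤ ∏ _i : ι, ∑' k, f k := prod_le_prod (fun i _ ↦ sum_nonneg fun k _ ↦ hf0 k)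
        fun i _ ↦ hf.sum_le_tsum t fun k _ ↦ hf0 k

lemma summable_mzv {d : ℕ} {s : Fin (d + 1) → ℕ} (hs : ∀ i, 1 ≤ s i) (hs0 : 2 ≤ s 0) :
    Summable fun k : MZVIndex (d + 1) ↦ ∏ i, (1 : ℝ) / (k.1 i : ℝ) ^ s i := by
  set e : ℝ := 1 + 1 / (d + 1) with he
  have one_lt : 1 < e := by
    rw [he, lt_add_iff_pos_right]
    positivity
  have hsum : Summable fun k : MZVIndex (d + 1) ↦ ∏ i, 1 / (k.1 i : ℝ) ^ e :=
    (summable_prod_of_summable_of_nonneg (Real.summable_one_div_nat_rpow.2 one_lt)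
      fun _ ↦ by positivity).comp_injective Subtype.val_injective
  refine hsum.of_nonneg_of_le (fun k ↦ by positivity) fun k ↦ ?_
  simp only [one_div, prod_inv_distrib]
  have hpos : ∀ i, (0 : ℝ) < k.1 i := fun i ↦ Nat.cast_pos.2 (k.2.2 i)
  refine inv_anti₀ (prod_pos fun i _ ↦ Real.rpow_pos_of_pos (hpos i) _) ?_
  calc ∏ i, (k.1 i : ℝ) ^ e
      = (∏ i, (k.1 i : ℝ)) * ∏ i, (k.1 i : ℝ) ^ (1 / (d + 1) : ℝ) := by
        rw [← prod_mul_distrib]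
        exact prod_congr rfl fun i _ ↦ by rw [he, Real.rpow_add (hpos i), Real.rpow_one]
    _ ≤ (∏ i, (k.1 i : ℝ)) * ∏ _i : Fin (d + 1), (k.1 0 : ℝ) ^ (1 / (d + 1) : ℝ) := by
        gcongr with i
        exact k.2.1.antitone i.zero_le
    _ = (∏ i, (k.1 i : ℝ)) * k.1 0 := by
        rw [prod_const, card_univ, Fintype.card_fin, ← Real.rpow_mul_natCast (hpos 0).le]
        push_cast
        rw [one_div_mul_cancel (by positivity), Real.rpow_one]
    _ ≤ ∏ i, (k.1 i : ℝ) ^ s i := by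
      have one_le : ∀ i, (1 : ℝ) ≤ k.1 i := fun i ↦ Nat.one_le_cast.2 (k.2.2 i)
      rw [Fin.prod_univ_succ, Fin.prod_univ_succ, mul_right_comm, ← sq]
      gcongr with i
      · exact one_le 0
      · exact le_self_pow₀ (one_le _) (Nat.one_le_iff_ne_zero.1 (hs _))

end Convergence

lemma hasSum_mzv {d : ℕ} {s : Fin (d + 1) → ℕ} (hs : ∀ i, 1 ≤ s i) (hs0 : 2 ≤ s 0) :
    HasSum (fun k : MZVIndex (d + 1) ↦ ∏ i, (1 : ℝ) / (k.1 i : ℝ) ^ s i) (mzv s) :=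
  (summable_mzv hs hs0).hasSum

lemma hasSum_mzv_one {s : ℕ} (hs : 2 ≤ s) :
    HasSum (fun k : MZVIndex 1 ↦ 1 / (k.1 0 : ℝ) ^ s) (mzv ![s]) := by
  simpa using hasSum_mzv (s := ![s]) (by simpa using one_le_two.trans hs) hs

section Telescoping

lemma hasSum_sub_add_of_antitone {u : ℕ → ℝ} (hu : Antitone u) (hlim : Tendsto u atTop (𝓝 0))
    (b : ℕ) : HasSum (fun i ↦ u i - u (i + b)) (∑ i ∈ range b, u i) := by
  have partial_sum (N : ℕ) : ∑ i ∈ range N, (u i - u (i + b)) =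
      ∑ i ∈ range b, u i - ∑ i ∈ range b, u (N + i) := by
    have := (sum_range_add u N b).symm.trans (add_comm N b ▸ sum_range_add u b N)
    simp only [add_comm _ b, sum_sub_distrib]
    linarith
  rw [hasSum_iff_tendsto_nat_of_nonneg fun i ↦ sub_nonneg.2 (hu (Nat.le_add_right i b))]
  simp only [partial_sum]
  simpa using tendsto_const_nhds.sub
    (tendsto_finsetSum (range b) fun i _ ↦ (tendsto_add_atTop_iff_nat i).2 hlim)

lemma hasSum_one_div_add_sub (n b : ℕ) :
    HasSum (fun i : ℕ ↦ 1 / ((n : ℝ) + i + 1) - 1 / ((n : ℝ) + i + b + 1)) (ℋ(n + b) - ℋ n) := by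
  have hanti : Antitone fun i : ℕ ↦ 1 / ((n : ℝ) + i + 1) := fun i j hij ↦ by
    dsimp only
    gcongr
  have hlim : Tendsto (fun i : ℕ ↦ 1 / ((n : ℝ) + i + 1)) atTop (𝓝 0) := by
    simpa [add_comm, add_left_comm] using
      (tendsto_add_atTop_iff_nat n).2 (tendsto_one_div_add_atTop_nhds_zero_nat (𝕜 := ℝ))
  rw [← sum_range_one_div_add_succ]
  simpa [add_assoc] using hasSum_sub_add_of_antitone hanti hlim b

lemma hasSum_one_div_succ_mul_add {b : ℕ} (hb : 0 < b) :
    HasSum (fun i : ℕ ↦ 1 / (((i : ℝ) + 1) * (i + b + 1))) (ℋ b / b) := by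
  have h := (hasSum_one_div_add_sub 0 b).div_const (b : ℝ)
  rw [zero_add, harmonic_zero, Rat.cast_zero, sub_zero] at h
  refine h.congr_fun fun i ↦ ?_
  rw [Nat.cast_zero, zero_add]
  field

lemma hasSum_one_div_add_succ_sq (n : ℕ) :
    HasSum (fun i : ℕ ↦ 1 / ((n : ℝ) + i + 1) ^ 2) (mzv ![2] - harmonicSq n) := by
  have := (hasSum_mzvIndex_one_iff (f := fun k ↦ 1 / (k : ℝ) ^ 2)).1
    (hasSum_mzv_one (s := 2) le_rfl)
  rw [← hasSum_nat_add_iff' n] at this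
  simpa [harmonicSq, add_comm _ (n : ℝ)] using this

end Telescoping

/-- The weight `g(n, q)` of `f q - f n`, for `n > q`, that remains of the depth-three sum once one
of its three indices has been summed out. -/
noncomputable def pairWeight (n q : ℕ) : ℝ :=
  (ℋ(n + q) - ℋ n) / ((n : ℝ) - q) - q / (((n : ℝ) + q) ^ 2 * (n - q))

section PairWeight

lemma pairWeight_zero_right (n : ℕ) : pairWeight n 0 = 0 := by simp [pairWeight]

lemma sum_range_pairWeight_eq_sum_Ico (n : ℕ) :
    ∑ q ∈ range n, pairWeight n q = ∑ q ∈ Ico 1 n, pairWeight n q := by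
  refine (sum_subset (fun q hq ↦ mem_range.2 (mem_Ico.1 hq).2) fun q hq hq' ↦ ?_).symm
  obtain rfl : q = 0 := by simp_all
  exact pairWeight_zero_right n

lemma div_add_le_harmonic_sub (n q : ℕ) : (q : ℝ) / (n + q) ≤ ℋ(n + q) - ℋ n := by
  rw [← sum_range_one_div_add_succ, div_eq_mul_one_div]
  refine (nsmul_eq_mul q (1 / ((n : ℝ) + q))).symm.trans_le ?_
  refine (card_range q ▸ card_nsmul_le_sum _ _ _) fun i hi ↦ ?_
  have : (i : ℝ) + 1 ≤ q := by exact_mod_cast mem_range.1 hi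
  exact one_div_le_one_div_of_le (by positivity) (by linarith)

lemma pairWeight_nonneg {n q : ℕ} (hqn : q < n) : 0 ≤ pairWeight n q := by
  have hpos : (0 : ℝ) < n - q := sub_pos.2 (Nat.cast_lt.2 hqn)
  have one_le : (1 : ℝ) ≤ n + q := by exact_mod_cast (by omega : 1 ≤ n + q)
  rw [pairWeight, ← div_div, ← sub_div]
  refine div_nonneg (sub_nonneg.2 (le_trans ?_ (div_add_le_harmonic_sub n q))) hpos.le
  exact div_le_div_of_nonneg_left q.cast_nonneg (by linarith) (le_self_pow₀ one_le two_ne_zero)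

lemma pairWeight_eq_sub {n q : ℕ} (hqn : q < n) :
    pairWeight n q = (ℋ(n + q) - ℋ n) / ((n : ℝ) - q)
      - (1 / (((n : ℝ) - q) * (n + q)) - 1 / ((n : ℝ) + q) ^ 2) / 2 := by
  have hsub : (n : ℝ) - q ≠ 0 := (sub_pos.2 (Nat.cast_lt.2 hqn)).ne'
  have hadd : (n : ℝ) + q ≠ 0 := by exact_mod_cast (by omega : n + q ≠ 0)
  rw [pairWeight]
  field

lemma sum_range_eq_sum_range_succ {M : Type*} [AddCommGroup M] (φ : ℕ → M) (n : ℕ) :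
    ∑ i ∈ range n, φ i = ∑ i ∈ range n, φ (i + 1) + φ 0 - φ n := by
  rw [← sum_range_succ', sum_range_succ, add_sub_cancel_right]

lemma sum_range_one_div_sub_mul_add {n : ℕ} (hn : 0 < n) :
    ∑ q ∈ range n, 1 / (((n : ℝ) - q) * (n + q)) = (ℋ(2 * n) + 1 / (2 * n)) / (2 * n) := by
  have partial_fraction : ∀ q ∈ range n, 1 / (((n : ℝ) - q) * (n + q)) =
      (1 / ((n : ℝ) - q) + 1 / ((n : ℝ) + q)) / (2 * n) := by
    intro q hq
    have hlt : (q : ℝ) < n := by exact_mod_cast mem_range.1 hq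
    have : (n : ℝ) - q ≠ 0 := by linarith
    field
  have sum_add : ∑ q ∈ range n, 1 / ((n : ℝ) + q) = ℋ(2 * n) - ℋ n + 1 / (2 * n) := by
    rw [sum_range_eq_sum_range_succ, two_mul n, ← sum_range_one_div_add_succ]
    push_cast
    simp only [add_assoc]
    field
  rw [sum_congr rfl partial_fraction, ← sum_div, sum_add_distrib, sum_range_one_div_sub, sum_add]
  ring

lemma sum_range_one_div_add_sq {n : ℕ} (hn : 0 < n) :
    ∑ q ∈ range n, 1 / ((n : ℝ) + q) ^ 2 =
      harmonicSq (2 * n) - harmonicSq n + 3 / (4 * (n : ℝ) ^ 2) := by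
  rw [sum_range_eq_sum_range_succ, two_mul n, harmonicSq, sum_range_add, harmonicSq]
  push_cast
  simp only [add_assoc]
  field

lemma sum_range_pairWeight {n : ℕ} (hn : 0 < n) :
    ∑ q ∈ range n, pairWeight n q =
      (ℋ(2 * n) ^ 2 - ℋ n ^ 2 - harmonicSq n - ℋ(2 * n) / (2 * n)) / 2
        + 1 / (4 * (n : ℝ) ^ 2) := by
  rw [sum_congr rfl fun q hq ↦ pairWeight_eq_sub (mem_range.1 hq), sum_sub_distrib, ← sum_div,
    sum_sub_distrib, sum_range_harmonic_sub_div_sub, sum_range_one_div_sub_mul_add hn,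
    sum_range_one_div_add_sq hn]
  field

lemma hasSum_harmonic_sub_div_succ (n : ℕ) :
    HasSum (fun i : ℕ ↦ (ℋ(n + 1 + i + n) - ℋ(n + 1 + i)) / ((i : ℝ) + 1))
      (∑ j ∈ range n, ℋ(n + j + 1) / ((n : ℝ) + j + 1)) := by
  have h := hasSum_sum fun j (_ : j ∈ range n) ↦ hasSum_one_div_succ_mul_add (Nat.succ_pos (n + j))
  push_cast at h
  refine h.congr_fun fun i ↦ ?_
  rw [← sum_range_one_div_add_succ, sum_div]
  refine sum_congr rfl fun j _ ↦ ?_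
  push_cast
  rw [div_div]
  ring

lemma hasSum_pairWeight {n : ℕ} (hn : 0 < n) :
    HasSum (fun i ↦ pairWeight (n + 1 + i) n)
      (∑ q ∈ range n, pairWeight n q + (mzv ![2] / 2 - 1 / (4 * (n : ℝ) ^ 2))) := by
  have harmonic_part := hasSum_harmonic_sub_div_succ n
  have product_part := hasSum_one_div_succ_mul_add (b := 2 * n) (by omega)
  have square_part := hasSum_one_div_add_succ_sq (2 * n)
  have upper_half : ∑ j ∈ range n, ℋ(n + j + 1) / ((n : ℝ) + j + 1) =
      (ℋ(2 * n) ^ 2 + harmonicSq (2 * n)) / 2 - (ℋ n ^ 2 + harmonicSq n) / 2 := by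
    rw [← sum_range_harmonic_succ_div_succ, ← sum_range_harmonic_succ_div_succ, two_mul,
      sum_range_add, add_sub_cancel_left]
    push_cast
    rfl
  have sum_eq : ∑ q ∈ range n, pairWeight n q + (mzv ![2] / 2 - 1 / (4 * (n : ℝ) ^ 2)) =
      ∑ j ∈ range n, ℋ(n + j + 1) / ((n : ℝ) + j + 1)
        - (ℋ(2 * n) / ((2 * n : ℕ) : ℝ) - (mzv ![2] - harmonicSq (2 * n))) / 2 := by
    rw [upper_half, sum_range_pairWeight hn]
    push_cast
    ring
  rw [sum_eq]
  refine (harmonic_part.sub ((product_part.sub square_part).div_const 2)).congr_fun fun i ↦ ?_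
  rw [pairWeight_eq_sub (by omega)]
  push_cast
  ring

lemma sum_range_pairWeight_le_harmonic_sq {n : ℕ} (hn : 0 < n) :
    ∑ q ∈ range n, pairWeight n q ≤ ℋ(2 * n) ^ 2 := by
  have hH : 1 ≤ ℋ(2 * n) := one_le_harmonic (by omega)
  have hn1 : (1 : ℝ) ≤ n := Nat.one_le_cast.2 hn
  have inv_le : 1 / (4 * (n : ℝ) ^ 2) ≤ 1 / 4 :=
    one_div_le_one_div_of_le (by norm_num) (by nlinarith)
  have quotient_nonneg : 0 ≤ ℋ(2 * n) / (2 * (n : ℝ)) := by positivity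
  rw [sum_range_pairWeight hn]
  nlinarith [sq_nonneg (ℋ n), harmonicSq_nonneg n]

end PairWeight

section Pairs

variable {f : ℕ → ℝ} {a : ℝ}

lemma hasSum_sub_mul_pairWeight (hf : ∀ n, 0 ≤ f n) (hsum : Summable fun n ↦ f n * ℋ(2 * n) ^ 2)
    (ha : HasSum (fun k : MZVIndex 1 ↦
      f (k.1 0) * (mzv ![2] / 2 - 1 / (4 * (k.1 0 : ℝ) ^ 2))) a) :
    HasSum (fun k : MZVIndex 2 ↦ (f (k.1 1) - f (k.1 0)) * pairWeight (k.1 0) (k.1 1)) a := by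
  have weight_nonneg (k : MZVIndex 2) : 0 ≤ pairWeight (k.1 0) (k.1 1) :=
    pairWeight_nonneg (k.2.1 Fin.zero_lt_one)
  have row_summable : Summable fun k : MZVIndex 1 ↦
      f (k.1 0) * ∑ q ∈ range (k.1 0), pairWeight (k.1 0) q := by
    have majorant := hasSum_mzvIndex_one_iff (f := fun n ↦ f n * ℋ(2 * n) ^ 2) |>.2
      ((summable_nat_add_iff 1).2 hsum).hasSum
    refine majorant.summable.of_nonneg_of_le (fun k ↦ ?_) fun k ↦ ?_
    · exact mul_nonneg (hf _) (sum_nonneg fun q hq ↦ pairWeight_nonneg (mem_range.1 hq))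
    · exact mul_le_mul_of_nonneg_left (sum_range_pairWeight_le_harmonic_sq (k.2.2 0)) (hf _)
  obtain ⟨b, hb⟩ := row_summable
  have rows : HasSum (fun k : MZVIndex 2 ↦ f (k.1 0) * pairWeight (k.1 0) (k.1 1)) b := by
    refine hasSum_mzvIndex_of_snoc (F := fun k ↦ f (k 0) * pairWeight (k 0) (k 1))
      (G := fun p ↦ f (p 0) * ∑ q ∈ range (p 0), pairWeight (p 0) q)
      (fun k ↦ mul_nonneg (hf _) (weight_nonneg k)) (fun p ↦ ?_) hb
    rw [sum_range_pairWeight_eq_sum_Ico, mul_sum]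
    rfl
  have columns : HasSum (fun k : MZVIndex 2 ↦ f (k.1 1) * pairWeight (k.1 0) (k.1 1)) (b + a) :=
    hasSum_mzvIndex_of_cons (F := fun k ↦ f (k 1) * pairWeight (k 0) (k 1))
      (G := fun p ↦ f (p 0) * (∑ q ∈ range (p 0), pairWeight (p 0) q +
        (mzv ![2] / 2 - 1 / (4 * (p 0 : ℝ) ^ 2))))
      (fun k ↦ mul_nonneg (hf _) (weight_nonneg k))
      (fun p ↦ (hasSum_pairWeight (p.2.2 0)).mul_left (f (p.1 0)))
      (by simpa only [mul_add] using hb.add ha)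
  simpa only [sub_mul, add_sub_cancel_left] using columns.sub rows

end Pairs

/-- The divided difference of `f`, regarded as a function of `n²`, with the sign changed so that it
is nonnegative for decreasing `f`. It has the junk value `0` at `m = n`. -/
noncomputable def sqDividedDiff (f : ℕ → ℝ) (m n : ℕ) : ℝ :=
  (f m - f n) / ((n : ℝ) ^ 2 - (m : ℝ) ^ 2)

section Triples

variable {f : ℕ → ℝ} {a : ℝ}

lemma sqDividedDiff_comm (f : ℕ → ℝ) (m n : ℕ) : sqDividedDiff f m n = sqDividedDiff f n m := by
  rw [sqDividedDiff, sqDividedDiff, ← neg_sub (f n), ← neg_sub ((m : ℝ) ^ 2), neg_div_neg_eq]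

lemma sqDividedDiff_nonneg (hf : AntitoneOn f (Set.Ici 1)) {m n : ℕ} (hm : 0 < m) (hmn : m < n) :
    0 ≤ sqDividedDiff f m n := by
  refine div_nonneg (sub_nonneg.2 (hf hm (hm.trans hmn) hmn.le)) (sub_nonneg.2 ?_)
  gcongr

lemma sqDividedDiff_mul_eq_sub_mul_pairWeight (f : ℕ → ℝ) {n q : ℕ} (hqn : q < n) :
    q * sqDividedDiff f q n * (ℋ(n + q) - 1 / ((n : ℝ) + q) - ℋ n)
      + n * sqDividedDiff f q n * (ℋ(n + q) - ℋ n) = (f q - f n) * pairWeight n q := by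
  have hsub : (n : ℝ) - q ≠ 0 := (sub_pos.2 (Nat.cast_lt.2 hqn)).ne'
  have hadd : (n : ℝ) + q ≠ 0 := by exact_mod_cast (by omega : n + q ≠ 0)
  rw [sqDividedDiff, pairWeight, sq_sub_sq]
  field

lemma sum_Ico_one_div_add {l : ℕ} (hl : 0 < l) (k : ℕ) :
    ∑ m ∈ Ico 1 l, 1 / ((k : ℝ) + m) = ℋ(k + l) - 1 / ((k : ℝ) + l) - ℋ k := by
  obtain ⟨l, rfl⟩ := Nat.exists_eq_add_one.2 hl
  have := sum_range_one_div_add_succ k l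
  rw [sum_Ico_eq_sum_range, ← add_assoc, harmonic_succ_real, Nat.add_sub_cancel]
  push_cast
  simp only [add_comm (1 : ℝ), ← add_assoc, this]
  ring

lemma hasSum_sqDividedDiff_of_snoc (hf : AntitoneOn f (Set.Ici 1))
    (ha : HasSum (fun k : MZVIndex 2 ↦ k.1 1 * sqDividedDiff f (k.1 1) (k.1 0) *
      (ℋ(k.1 0 + k.1 1) - 1 / ((k.1 0 : ℝ) + k.1 1) - ℋ(k.1 0))) a) :
    HasSum (fun k : MZVIndex 3 ↦
      k.1 1 * sqDividedDiff f (k.1 1) (k.1 0) / ((k.1 0 : ℝ) + k.1 2)) a := by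
  refine hasSum_mzvIndex_of_snoc
    (F := fun k ↦ k 1 * sqDividedDiff f (k 1) (k 0) / ((k 0 : ℝ) + k 2))
    (G := fun p ↦ p 1 * sqDividedDiff f (p 1) (p 0) *
      (ℋ(p 0 + p 1) - 1 / ((p 0 : ℝ) + p 1) - ℋ(p 0))) (fun k ↦ ?_)
    (fun p ↦ ?_) ha
  · have := sqDividedDiff_nonneg hf (k.2.2 1) (k.2.1 Fin.zero_lt_one)
    positivity
  · rw [← sum_Ico_one_div_add (p.2.2 1), mul_sum]
    exact sum_congr rfl fun m _ ↦ div_eq_mul_one_div _ _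

lemma hasSum_sqDividedDiff_of_cons (hf : AntitoneOn f (Set.Ici 1))
    (ha : HasSum (fun k : MZVIndex 2 ↦ k.1 0 * sqDividedDiff f (k.1 1) (k.1 0) *
      (ℋ(k.1 0 + k.1 1) - ℋ(k.1 0))) a) :
    HasSum (fun k : MZVIndex 3 ↦
      k.1 1 * k.1 2 * sqDividedDiff f (k.1 2) (k.1 1) / (k.1 0 * ((k.1 0 : ℝ) + k.1 2))) a := by
  refine hasSum_mzvIndex_of_cons
    (F := fun k ↦ k 1 * k 2 * sqDividedDiff f (k 2) (k 1) / (k 0 * ((k 0 : ℝ) + k 2)))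
    (G := fun p ↦ p 0 * sqDividedDiff f (p 1) (p 0) * (ℋ(p 0 + p 1) - ℋ(p 0))) (fun k ↦ ?_)
    (fun p ↦ ?_) ha
  · have := sqDividedDiff_nonneg hf (k.2.2 2) (k.2.1 (by decide : (1 : Fin 3) < 2))
    positivity
  · refine ((hasSum_one_div_add_sub (p.1 0) (p.1 1)).mul_left _).congr_fun fun i ↦ ?_
    change p.1 0 * p.1 1 * sqDividedDiff f (p.1 1) (p.1 0) / (((p.1 0 + 1 + i : ℕ) : ℝ) *
      (((p.1 0 + 1 + i : ℕ) : ℝ) + p.1 1)) = _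
    push_cast
    field

lemma hasSum_sqDividedDiff_triple (hf : ∀ n, 0 ≤ f n) (hanti : AntitoneOn f (Set.Ici 1))
    (hsum : Summable fun n ↦ f n * ℋ(2 * n) ^ 2)
    (ha : HasSum (fun k : MZVIndex 1 ↦
      f (k.1 0) * (mzv ![2] / 2 - 1 / (4 * (k.1 0 : ℝ) ^ 2))) a) :
    HasSum (fun k : MZVIndex 3 ↦
      k.1 1 * sqDividedDiff f (k.1 1) (k.1 0) / ((k.1 0 : ℝ) + k.1 2) +
      k.1 1 * k.1 2 * sqDividedDiff f (k.1 2) (k.1 1) / (k.1 0 * ((k.1 0 : ℝ) + k.1 2))) a := by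
  let W₁ (k : MZVIndex 2) : ℝ := k.1 1 * sqDividedDiff f (k.1 1) (k.1 0) *
    (ℋ(k.1 0 + k.1 1) - 1 / ((k.1 0 : ℝ) + k.1 1) - ℋ(k.1 0))
  let W₂ (k : MZVIndex 2) : ℝ := k.1 0 * sqDividedDiff f (k.1 1) (k.1 0) *
    (ℋ(k.1 0 + k.1 1) - ℋ(k.1 0))
  have diff_nonneg (k : MZVIndex 2) : 0 ≤ sqDividedDiff f (k.1 1) (k.1 0) :=
    sqDividedDiff_nonneg hanti (k.2.2 1) (k.2.1 Fin.zero_lt_one)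
  have nonneg₁ (k : MZVIndex 2) : 0 ≤ W₁ k := by
    refine mul_nonneg (mul_nonneg (Nat.cast_nonneg _) (diff_nonneg k)) ?_
    rw [← sum_Ico_one_div_add (k.2.2 1)]
    positivity
  have nonneg₂ (k : MZVIndex 2) : 0 ≤ W₂ k := by
    refine mul_nonneg (mul_nonneg (Nat.cast_nonneg _) (diff_nonneg k)) ?_
    rw [← sum_range_one_div_add_succ]
    positivity
  have sum_pairs : HasSum (fun k ↦ W₁ k + W₂ k) a :=
    (hasSum_sub_mul_pairWeight hf hsum ha).congr_fun fun k ↦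
      sqDividedDiff_mul_eq_sub_mul_pairWeight f (k.2.1 Fin.zero_lt_one)
  obtain ⟨a₁, h₁⟩ : Summable W₁ :=
    sum_pairs.summable.of_nonneg_of_le nonneg₁ fun k ↦ le_add_of_nonneg_right (nonneg₂ k)
  obtain ⟨a₂, h₂⟩ : Summable W₂ :=
    sum_pairs.summable.of_nonneg_of_le nonneg₂ fun k ↦ le_add_of_nonneg_left (nonneg₁ k)
  rw [sum_pairs.unique (h₁.add h₂)]
  exact (hasSum_sqDividedDiff_of_snoc hanti h₁).add (hasSum_sqDividedDiff_of_cons hanti h₂)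

end Triples

section GeometricSums

variable {K : Type*} [Field K]

lemma sum_range_neg_one_pow_sub_mul {x y : K} (hxy : x + y ≠ 0) (s : ℕ) :
    ∑ i ∈ range (s + 1), ((-1) ^ (s - i + 1) - (-1) ^ i) * (x ^ i * y ^ (s - i)) =
      -((1 + (-1) ^ s) * (x ^ (s + 1) + y ^ (s + 1)) / (x + y)) := by
  have geom_neg_right := geom_sum₂_mul x (-y) (s + 1)
  have geom_neg_left := geom_sum₂_mul (-x) y (s + 1)
  have split : ∑ i ∈ range (s + 1), ((-1) ^ (s - i + 1) - (-1) ^ i) * (x ^ i * y ^ (s - i)) =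
      -(∑ i ∈ range (s + 1), x ^ i * (-y) ^ (s - i)
        + ∑ i ∈ range (s + 1), (-x) ^ i * y ^ (s - i)) := by
    rw [← sum_add_distrib, ← sum_neg_distrib]
    refine sum_congr rfl fun i _ ↦ ?_
    rw [neg_pow x, neg_pow y]
    ring
  rw [Nat.add_sub_cancel] at geom_neg_left geom_neg_right
  rw [neg_pow y] at geom_neg_right
  rw [neg_pow x] at geom_neg_left
  rw [split, neg_inj, eq_div_iff hxy]
  linear_combination geom_neg_right - geom_neg_left

lemma sum_range_one_add_neg_one_pow_mul {x z : K} (hxz : z ^ 2 ≠ x ^ 2) {M : ℕ} (hM : Even M) :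
    ∑ j ∈ range (M + 1), (1 + (-1) ^ (M - j)) * (z ^ j * x ^ (M - j)) =
      2 * (z ^ (M + 2) - x ^ (M + 2)) / (z ^ 2 - x ^ 2) := by
  have geom := geom_sum₂_mul z x (M + 1)
  have geom_neg := geom_sum₂_mul z (-x) (M + 1)
  rw [Nat.add_sub_cancel] at geom geom_neg
  rw [hM.add_one.neg_pow] at geom_neg
  rw [eq_div_iff (sub_ne_zero.2 hxz)]
  simp only [mul_left_comm _ (z ^ _), add_mul, one_mul, ← neg_pow, mul_add, sum_add_distrib]
  linear_combination (z + x) * geom + (z - x) * geom_neg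

lemma sum_range_weighted_monomial {x y z : K} (hxy : x + y ≠ 0) (hxz : z ^ 2 ≠ x ^ 2)
    (hyz : z ^ 2 ≠ y ^ 2) {M : ℕ} (hM : Even M) :
    ∑ j ∈ range (M + 1), ∑ i ∈ range (M - j + 1),
        ((-1) ^ (M - j - i + 1) - (-1) ^ (i + 2)) *
          (x ^ (i + 2) * z ^ (j + 1) * y ^ (M - j - i + 1)) =
      -(2 * x ^ 2 * y * z / (x + y)) *
        (x * ((z ^ (M + 2) - x ^ (M + 2)) / (z ^ 2 - x ^ 2))
          + y * ((z ^ (M + 2) - y ^ (M + 2)) / (z ^ 2 - y ^ 2))) := by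
  have inner (j : ℕ) : ∑ i ∈ range (M - j + 1), ((-1) ^ (M - j - i + 1) - (-1) ^ (i + 2)) *
        (x ^ (i + 2) * z ^ (j + 1) * y ^ (M - j - i + 1)) =
      -(x ^ 2 * y * z / (x + y)) *
        (x * ((1 + (-1) ^ (M - j)) * (z ^ j * x ^ (M - j)))
          + y * ((1 + (-1) ^ (M - j)) * (z ^ j * y ^ (M - j)))) := by
    calc _ = x ^ 2 * y * z ^ (j + 1) * ∑ i ∈ range (M - j + 1),
            ((-1) ^ (M - j - i + 1) - (-1) ^ i) * (x ^ i * y ^ (M - j - i)) := by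
          rw [mul_sum]
          exact sum_congr rfl fun i _ ↦ by ring
      _ = _ := by
          rw [sum_range_neg_one_pow_sub_mul hxy]
          ring
  rw [sum_congr rfl fun j _ ↦ inner j, ← mul_sum, sum_add_distrib, ← mul_sum, ← mul_sum,
    sum_range_one_add_neg_one_pow_mul hxz hM, sum_range_one_add_neg_one_pow_mul hyz hM]
  ring

end GeometricSums

section WeightedSum

lemma sum_Icc_sum_Icc_eq_sum_range_sum_range {A : Type*} [AddCommMonoid A] (F : ℕ → ℕ → ℕ → A)
    (M : ℕ) :
    ∑ a ∈ Icc 2 (M + 2), ∑ b ∈ Icc 1 (M + 4 - a - 1), F a b (M + 4 - a - b) =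
      ∑ j ∈ range (M + 1), ∑ i ∈ range (M - j + 1), F (i + 2) (j + 1) (M - j - i + 1) := by
  rw [sum_sigma', sum_sigma']
  refine sum_nbij' (fun p ↦ ⟨p.2 - 1, p.1 - 2⟩) (fun p ↦ ⟨p.2 + 2, p.1 + 1⟩) ?_ ?_ ?_ ?_ ?_ <;>
    rintro ⟨a, b⟩ h <;> simp only [mem_sigma, mem_range, mem_Icc] at h ⊢
  · omega
  · omega
  · congr <;> omega
  · simp
  · congr <;> omega

lemma one_div_pow_sub_div_sq_sub (p : ℕ) {m n : ℕ} (hm : 0 < m) (hn : 0 < n) :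
    ((1 / (m : ℝ)) ^ p - (1 / (n : ℝ)) ^ p) / ((1 / (m : ℝ)) ^ 2 - (1 / (n : ℝ)) ^ 2) =
      (m : ℝ) ^ 2 * (n : ℝ) ^ 2 * sqDividedDiff (fun i ↦ 1 / (i : ℝ) ^ p) m n := by
  have denominator : (1 / (m : ℝ)) ^ 2 - (1 / (n : ℝ)) ^ 2 =
      ((n : ℝ) ^ 2 - (m : ℝ) ^ 2) / ((m : ℝ) ^ 2 * (n : ℝ) ^ 2) := by
    field
  rw [denominator, div_div_eq_mul_div, sqDividedDiff, one_div_pow, one_div_pow]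
  ring

lemma sum_weighted_mzv_summand {w : ℕ} (hw : 4 ≤ w) (hew : Even w) (k : MZVIndex 3) :
    ∑ a ∈ Icc 2 (w - 2), ∑ b ∈ Icc 1 (w - a - 1), ((-1 : ℝ) ^ (w - a - b) - (-1) ^ a) *
        ∏ i, (1 : ℝ) / (k.1 i : ℝ) ^ ![a, b, w - a - b] i =
      -2 * (k.1 1 * sqDividedDiff (fun n ↦ 1 / (n : ℝ) ^ (w - 2)) (k.1 1) (k.1 0) /
          ((k.1 0 : ℝ) + k.1 2) +
        k.1 1 * k.1 2 * sqDividedDiff (fun n ↦ 1 / (n : ℝ) ^ (w - 2)) (k.1 2) (k.1 1) /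
          (k.1 0 * ((k.1 0 : ℝ) + k.1 2))) := by
  obtain ⟨M, rfl⟩ := Nat.exists_eq_add_of_le' hw
  have hM : Even M := (Nat.even_add.1 hew).2 (by decide)
  have pos (i : Fin 3) : (0 : ℝ) < k.1 i := Nat.cast_pos.2 (k.2.2 i)
  have sq_ne {i j : Fin 3} (hij : i ≠ j) : (1 / (k.1 i : ℝ)) ^ 2 ≠ (1 / (k.1 j : ℝ)) ^ 2 := by
    rw [Ne, sq_eq_sq₀ (one_div_pos.2 (pos i)).le (one_div_pos.2 (pos j)).le, one_div, one_div,
      inv_inj, Nat.cast_inj]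
    exact k.2.1.injective.ne hij
  have add_ne : 1 / (k.1 0 : ℝ) + 1 / (k.1 2 : ℝ) ≠ 0 :=
    (add_pos (one_div_pos.2 (pos 0)) (one_div_pos.2 (pos 2))).ne'
  have prod_eq (a b c : ℕ) : ∏ i, (1 : ℝ) / (k.1 i : ℝ) ^ ![a, b, c] i =
      (1 / (k.1 0 : ℝ)) ^ a * (1 / (k.1 1 : ℝ)) ^ b * (1 / (k.1 2 : ℝ)) ^ c := by
    rw [Fin.prod_univ_three, one_div_pow, one_div_pow, one_div_pow]
    rfl
  simp only [prod_eq, show M + 4 - 2 = M + 2 from rfl]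
  rw [sum_Icc_sum_Icc_eq_sum_range_sum_range fun a b c ↦ ((-1 : ℝ) ^ c - (-1) ^ a) *
      ((1 / (k.1 0 : ℝ)) ^ a * (1 / (k.1 1 : ℝ)) ^ b * (1 / (k.1 2 : ℝ)) ^ c),
    sum_range_weighted_monomial add_ne (sq_ne (by decide)) (sq_ne (by decide)) hM,
    one_div_pow_sub_div_sq_sub _ (k.2.2 1) (k.2.2 0),
    one_div_pow_sub_div_sq_sub _ (k.2.2 1) (k.2.2 2), sqDividedDiff_comm _ (k.1 1) (k.1 2)]
  have := pos 0
  have := pos 1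
  have := pos 2
  field

lemma harmonic_le_four_mul_rpow (n : ℕ) : ℋ n ≤ 4 * (n : ℝ) ^ (1 / 4 : ℝ) := by
  rcases n.eq_zero_or_pos with rfl | hn
  · simp
  have hn' : (0 : ℝ) < n := Nat.cast_pos.2 hn
  have log_le := Real.log_le_sub_one_of_pos (Real.rpow_pos_of_pos hn' (1 / 4))
  rw [Real.log_rpow hn'] at log_le
  linarith [harmonic_le_one_add_log n]

lemma summable_one_div_pow_mul_harmonic_sq {p : ℕ} (hp : 2 ≤ p) :
    Summable fun n : ℕ ↦ 1 / (n : ℝ) ^ p * ℋ(2 * n) ^ 2 := by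
  have hsum : Summable fun n : ℕ ↦ 16 * (2 : ℝ) ^ (1 / 2 : ℝ) * (1 / (n : ℝ) ^ (3 / 2 : ℝ)) :=
    (Real.summable_one_div_nat_rpow.2 (by norm_num)).mul_left _
  refine hsum.of_nonneg_of_le (fun n ↦ by positivity) fun n ↦ ?_
  rcases n.eq_zero_or_pos with rfl | hn
  · simp
  have hn' : (0 : ℝ) < n := Nat.cast_pos.2 hn
  have harmonic_sq_le : ℋ(2 * n) ^ 2 ≤ 16 * (2 : ℝ) ^ (1 / 2 : ℝ) * (n : ℝ) ^ (1 / 2 : ℝ) := by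
    calc ℋ(2 * n) ^ 2
        ≤ (4 * ((2 * n : ℕ) : ℝ) ^ (1 / 4 : ℝ)) ^ 2 :=
          pow_le_pow_left₀ (zero_le_one.trans (one_le_harmonic (by omega)))
            (harmonic_le_four_mul_rpow _) 2
      _ = 16 * (2 : ℝ) ^ (1 / 2 : ℝ) * (n : ℝ) ^ (1 / 2 : ℝ) := by
          rw [mul_pow, ← Real.rpow_mul_natCast (Nat.cast_nonneg _), Nat.cast_mul,
            Real.mul_rpow (Nat.cast_nonneg _) hn'.le]
          norm_num
          ring
  calc 1 / (n : ℝ) ^ p * ℋ(2 * n) ^ 2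
      ≤ 1 / (n : ℝ) ^ 2 * (16 * (2 : ℝ) ^ (1 / 2 : ℝ) * (n : ℝ) ^ (1 / 2 : ℝ)) := by
        gcongr
        exact Nat.one_le_cast.2 hn
    _ = 16 * (2 : ℝ) ^ (1 / 2 : ℝ) * (1 / (n : ℝ) ^ (3 / 2 : ℝ)) := by
        have : (n : ℝ) ^ 2 = (n : ℝ) ^ (1 / 2 : ℝ) * (n : ℝ) ^ (3 / 2 : ℝ) := by
          rw [← Real.rpow_add hn', ← Real.rpow_natCast]
          norm_num
        rw [this]
        field

lemma hasSum_sum_mul_mzv_three (c : ℕ → ℕ → ℝ) (w : ℕ) :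
    HasSum (fun k : MZVIndex 3 ↦ ∑ a ∈ Icc 2 (w - 2), ∑ b ∈ Icc 1 (w - a - 1),
        c a b * ∏ i, (1 : ℝ) / (k.1 i : ℝ) ^ ![a, b, w - a - b] i)
      (∑ a ∈ Icc 2 (w - 2), ∑ b ∈ Icc 1 (w - a - 1), c a b * mzv ![a, b, w - a - b]) := by
  refine hasSum_sum fun a ha ↦ hasSum_sum fun b hb ↦ (hasSum_mzv ?_ (mem_Icc.1 ha).1).mul_left _
  rw [mem_Icc] at ha hb
  simp only [Fin.forall_fin_succ, Matrix.cons_val_zero, Matrix.cons_val_succ,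
    IsEmpty.forall_iff, and_true]
  omega

lemma hasSum_one_div_pow_mul_sub {p : ℕ} (hp : 2 ≤ p) (c : ℝ) :
    HasSum (fun k : MZVIndex 1 ↦ 1 / (k.1 0 : ℝ) ^ p * (c - 1 / (4 * (k.1 0 : ℝ) ^ 2)))
      (mzv ![p] * c - mzv ![p + 2] / 4) := by
  refine (((hasSum_mzv_one hp).mul_right c).sub
    ((hasSum_mzv_one (hp.trans (Nat.le_add_right p 2))).div_const 4)).congr_fun fun k ↦ ?_
  have : (0 : ℝ) < k.1 0 := Nat.cast_pos.2 (k.2.2 0)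
  field

lemma antitoneOn_one_div_natCast_pow (p : ℕ) :
    AntitoneOn (fun n : ℕ ↦ 1 / (n : ℝ) ^ p) (Set.Ici 1) := by
  intro m (hm : 1 ≤ m) n _ hmn
  dsimp only
  gcongr

end WeightedSum

theorem weighted_sum_depth3_c_minus_a (w : ℕ) (hw : 4 ≤ w) (hew : Even w) :
    (∑ a ∈ Finset.Icc 2 (w - 2), ∑ b ∈ Finset.Icc 1 (w - a - 1),
        ((-1 : ℝ) ^ (w - a - b) - (-1 : ℝ) ^ a) * mzv ![a, b, w - a - b])
    = (1 / 2) * mzv ![w] - mzv ![2] * mzv ![w - 2] := by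
  have hp : 2 ≤ w - 2 := by omega
  have summed_triple := hasSum_sqDividedDiff_triple (fun n ↦ by positivity)
    (antitoneOn_one_div_natCast_pow (w - 2)) (summable_one_div_pow_mul_harmonic_sq hp)
    (hasSum_one_div_pow_mul_sub hp (mzv ![2] / 2))
  have summed_mzv := hasSum_sum_mul_mzv_three (fun a b ↦ (-1) ^ (w - a - b) - (-1) ^ a) w
  rw [summed_mzv.unique
      ((summed_triple.mul_left (-2)).congr_fun (sum_weighted_mzv_summand hw hew)),
    Nat.sub_add_cancel (by omega)]
  ring
end

section
/- Let u ≥ 3 be an integer and q = u−1. Then Σ_{a+b=u, a≥2, b≥1} ζ(a,2,b) = ζ(u,2) + ζ(3,q) − ζ(2,q,1). -/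
/-!
Everything takes place in `ℝ≥0∞`, with sums over `k > n > m > 0`. Let
`G a b c = ∑ k⁻ᵃ n⁻ᵇ m⁻ᶜ (k - m)⁻¹`. The partial fraction
`1 / (m (k - m)) = (1 / k) (1 / m + 1 / (k - m))`, applied `q - 1` times, gives
`G 1 p (q - 1) = ∑_{a=2}^q ζ(a, p, q + 1 - a) + G q p 0`. On the other hand, the sum over `k > n` of
`1 / (k (k - m))` telescopes to `(1 / m) ∑_{0 ≤ j < m} 1 / (n - j)`, whose `j = 0` and `j > 0` terms
give `G 1 p (q - 1) = ζ(p + 1, q) + G p q 0`. Adding the resulting identity to the one with `p` and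
`q` exchanged cancels both `G` terms; the theorem is the case `p = 2`.
-/

open Finset
open scoped ENNReal

lemma inv_mul_inv_eq_inv_add_mul {x y : ℝ≥0∞} (hx : x ≠ 0) (hx' : x ≠ ∞) (hy : y ≠ 0)
    (hy' : y ≠ ∞) :
    x⁻¹ * y⁻¹ = (x + y)⁻¹ * (x⁻¹ + y⁻¹) := by
  have hsum : x⁻¹ + y⁻¹ = (x + y) * (x⁻¹ * y⁻¹) := by
    rw [add_mul, ← mul_assoc, ENNReal.mul_inv_cancel hx hx', one_mul, mul_left_comm,
      ENNReal.mul_inv_cancel hy hy', mul_one, add_comm]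
  rw [hsum, ENNReal.inv_mul_cancel_left' (by simp [hx]) (by simp [hx', hy'])]

lemma inv_natCast_mul_inv_natCast_sub {m k : ℕ} (hm : 0 < m) (hmk : m < k) :
    (m : ℝ≥0∞)⁻¹ * ((k - m : ℕ) : ℝ≥0∞)⁻¹
      = (k : ℝ≥0∞)⁻¹ * ((m : ℝ≥0∞)⁻¹ + ((k - m : ℕ) : ℝ≥0∞)⁻¹) := by
  obtain ⟨d, rfl⟩ := Nat.exists_eq_add_of_lt hmk
  rw [show m + d + 1 - m = d + 1 by omega, add_assoc, Nat.cast_add m]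
  exact inv_mul_inv_eq_inv_add_mul (by simpa using hm.ne') (by simp) (by simp) (by simp)

lemma tsum_sum_Ioo_comm (g : ℕ → ℕ → ℝ≥0∞) :
    ∑' k : ℕ+, ∑ n ∈ Ioo 0 (k : ℕ), g k n = ∑' (n : ℕ+) (t : ℕ), g (n + 1 + t) n := by
  have inner (k : ℕ+) : ∑ n ∈ Ioo 0 (k : ℕ), g k n = ∑' n : ℕ+, if n < k then g k n else 0 := by
    have extend : ∑ n ∈ Ioo 0 (k : ℕ), g k n
        = ∑' n : ℕ, if n ∈ Ioo 0 (k : ℕ) then g k n else 0 := by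
      rw [tsum_eq_sum fun n hn ↦ if_neg hn]
      exact sum_congr rfl fun n hn ↦ (if_pos hn).symm
    rw [extend, ← PNat.coe_injective.tsum_eq]
    · simp
    · intro n hn
      exact ⟨⟨n, by aesop⟩, rfl⟩
  have outer (n : ℕ+) : ∑' t : ℕ, g (n + 1 + t) n = ∑' k : ℕ+, if n < k then g k n else 0 := by
    have hinj : Function.Injective fun t : ℕ ↦ n + t.succPNat := by
      intro s t h
      simpa using h
    rw [← hinj.tsum_eq]
    · exact tsum_congr fun t ↦ by simp [PNat.lt_add_right, add_assoc, add_comm t]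
    · intro k hk
      have hnk : n < k := by by_contra h; simp [h] at hk
      exact ⟨(k - n).natPred, by simp [PNat.add_sub_of_lt hnk]⟩
  simp_rw [inner, outer]
  exact ENNReal.tsum_comm

lemma hasSum_inv_sub_inv_succ {x : ℝ} (hx : 0 < x) :
    HasSum (fun t : ℕ ↦ (x + t)⁻¹ - (x + t + 1)⁻¹) x⁻¹ := by
  have hnonneg (t : ℕ) : 0 ≤ (x + t)⁻¹ - (x + t + 1)⁻¹ :=
    sub_nonneg.2 (inv_anti₀ (by positivity) (by linarith))
  have partial_sum (N : ℕ) :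
      ∑ t ∈ range N, ((x + t)⁻¹ - (x + t + 1)⁻¹) = x⁻¹ - (x + N)⁻¹ := by
    simpa [add_assoc] using sum_range_sub' (fun t : ℕ ↦ (x + t)⁻¹) N
  rw [hasSum_iff_tendsto_nat_of_nonneg hnonneg]
  simp_rw [partial_sum]
  simpa using (Filter.tendsto_atTop_add_const_left _ x
    tendsto_natCast_atTop_atTop).inv_tendsto_atTop.const_sub x⁻¹

lemma hasSum_inv_sub_sub_inv {x : ℝ} {m : ℕ} (hx : m < x + 1) :
    HasSum (fun t : ℕ ↦ (x + 1 + t - m)⁻¹ - (x + 1 + t)⁻¹) (∑ j ∈ range m, (x - j)⁻¹) := by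
  have telescope (t : ℕ) : (x + 1 + t - m)⁻¹ - (x + 1 + t)⁻¹
      = ∑ j ∈ range m, ((x - j + t)⁻¹ - (x - j + t + 1)⁻¹) := by
    have h := sum_range_sub (fun j : ℕ ↦ (x + 1 + t - j)⁻¹) m
    rw [Nat.cast_zero, sub_zero] at h
    rw [← h]
    refine sum_congr rfl fun j _ ↦ ?_
    push_cast
    ring_nf
  simp_rw [telescope]
  refine hasSum_sum fun j hj ↦ hasSum_inv_sub_inv_succ ?_
  have : (j : ℝ) + 1 ≤ m := mod_cast mem_range.1 hj
  linarith

lemma inv_natCast_eq_ofReal {n : ℕ} (hn : 0 < n) :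
    (n : ℝ≥0∞)⁻¹ = ENNReal.ofReal (n : ℝ)⁻¹ := by
  rw [ENNReal.ofReal_inv_of_pos (by positivity), ENNReal.ofReal_natCast]

lemma inv_mul_inv_sub_eq_ofReal {m k : ℕ} (hm : 0 < m) (hmk : m < k) :
    (k : ℝ≥0∞)⁻¹ * ((k - m : ℕ) : ℝ≥0∞)⁻¹
      = ENNReal.ofReal ((m : ℝ)⁻¹ * ((k - m : ℝ)⁻¹ - (k : ℝ)⁻¹)) := by
  have hsub : (0 : ℝ) < k - m := sub_pos.2 (mod_cast hmk)
  have hk : 0 < k := hm.trans hmk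
  rw [inv_natCast_eq_ofReal hk, inv_natCast_eq_ofReal (Nat.sub_pos_of_lt hmk),
    ← ENNReal.ofReal_mul (by positivity), Nat.cast_sub hmk.le]
  congr 1
  field_simp
  ring

lemma tsum_inv_mul_inv_sub {m n : ℕ} (hm : 0 < m) (hmn : m ≤ n) :
    ∑' t : ℕ, ((n + 1 + t : ℕ) : ℝ≥0∞)⁻¹ * ((n + 1 + t - m : ℕ) : ℝ≥0∞)⁻¹
      = (m : ℝ≥0∞)⁻¹ * ∑ j ∈ range m, ((n - j : ℕ) : ℝ≥0∞)⁻¹ := by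
  have hmn' : (m : ℝ) ≤ n := mod_cast hmn
  have hsum := (hasSum_inv_sub_sub_inv (x := n) (m := m) (by linarith)).mul_left (m : ℝ)⁻¹
  have term_nonneg (t : ℕ) : 0 ≤ (m : ℝ)⁻¹ * ((n + 1 + t - m : ℝ)⁻¹ - (n + 1 + t : ℝ)⁻¹) := by
    have hpos : (0 : ℝ) < n + 1 + t - m := by linarith [t.cast_nonneg (α := ℝ)]
    exact mul_nonneg (by positivity) (sub_nonneg.2 (inv_anti₀ hpos (by simp)))
  have limit_term {j : ℕ} (hj : j ∈ range m) :
      ENNReal.ofReal (n - j : ℝ)⁻¹ = ((n - j : ℕ) : ℝ≥0∞)⁻¹ := by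
    have hjn : j < n := (mem_range.1 hj).trans_le hmn
    rw [inv_natCast_eq_ofReal (Nat.sub_pos_of_lt hjn), Nat.cast_sub hjn.le]
  have limit_nonneg {j : ℕ} (hj : j ∈ range m) : (0 : ℝ) ≤ (n - j : ℝ)⁻¹ :=
    inv_nonneg.2 (sub_nonneg.2 (mod_cast (mem_range.1 hj).le.trans hmn))
  calc ∑' t : ℕ, ((n + 1 + t : ℕ) : ℝ≥0∞)⁻¹ * ((n + 1 + t - m : ℕ) : ℝ≥0∞)⁻¹
      = ∑' t : ℕ, ENNReal.ofReal ((m : ℝ)⁻¹ * ((n + 1 + t - m : ℝ)⁻¹ - (n + 1 + t : ℝ)⁻¹)) :=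
        tsum_congr fun t ↦ by
          rw [inv_mul_inv_sub_eq_ofReal hm (by omega)]
          push_cast
          rfl
    _ = ENNReal.ofReal ((m : ℝ)⁻¹ * ∑ j ∈ range m, (n - j : ℝ)⁻¹) := by
        rw [← ENNReal.ofReal_tsum_of_nonneg term_nonneg hsum.summable, hsum.tsum_eq]
    _ = (m : ℝ≥0∞)⁻¹ * ∑ j ∈ range m, ((n - j : ℕ) : ℝ≥0∞)⁻¹ := by
        rw [ENNReal.ofReal_mul (by positivity), ← inv_natCast_eq_ofReal hm,
          ENNReal.ofReal_sum_of_nonneg fun _ ↦ limit_nonneg, sum_congr rfl fun _ ↦ limit_term]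

lemma sum_Ioo_inv_sub (n : ℕ) :
    ∑ m ∈ Ioo 0 n, ((n - m : ℕ) : ℝ≥0∞)⁻¹ = ∑ m ∈ Ioo 0 n, (m : ℝ≥0∞)⁻¹ := by
  refine sum_nbij' (n - ·) (n - ·) ?_ ?_ ?_ ?_ ?_ <;> simp <;> omega

lemma sum_range_inv_sub {m : ℕ} (hm : 0 < m) (n : ℕ) :
    ∑ j ∈ range m, ((n - j : ℕ) : ℝ≥0∞)⁻¹
      = (n : ℝ≥0∞)⁻¹ + ∑ j ∈ Ioo 0 m, ((n - j : ℕ) : ℝ≥0∞)⁻¹ := by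
  rw [range_eq_Ico, sum_eq_sum_Ico_succ_bot hm]
  rfl

lemma tsum_inv_mul_sum_inv_sub (c n : ℕ) :
    ∑' t : ℕ, ((n + 1 + t : ℕ) : ℝ≥0∞)⁻¹ *
        ∑ m ∈ Ioo 0 n, (m : ℝ≥0∞)⁻¹ ^ c * ((n + 1 + t - m : ℕ) : ℝ≥0∞)⁻¹
      = ∑ m ∈ Ioo 0 n, (m : ℝ≥0∞)⁻¹ ^ (c + 1) *
        ((n : ℝ≥0∞)⁻¹ + ∑ j ∈ Ioo 0 m, ((n - j : ℕ) : ℝ≥0∞)⁻¹) := by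
  simp_rw [mul_sum]
  rw [Summable.tsum_finsetSum fun _ _ ↦ ENNReal.summable]
  refine sum_congr rfl fun m hm ↦ ?_
  obtain ⟨hm0, hmn⟩ := mem_Ioo.1 hm
  simp only [mul_left_comm _ ((m : ℝ≥0∞)⁻¹ ^ c)]
  rw [ENNReal.tsum_mul_left, tsum_inv_mul_inv_sub hm0 hmn.le, sum_range_inv_sub hm0, pow_succ,
    mul_assoc]

/-- The double zeta value `ζ(a, b)` as an iterated sum in `ℝ≥0∞`, where divergence is the value `∞`
rather than a junk value. -/
noncomputable def doubleZeta (a b : ℕ) : ℝ≥0∞ :=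
  ∑' k : ℕ+, (k : ℝ≥0∞)⁻¹ ^ a * ∑ n ∈ Ioo 0 (k : ℕ), (n : ℝ≥0∞)⁻¹ ^ b

/-- The triple zeta value `ζ(a, b, c)` as an iterated sum in `ℝ≥0∞`. -/
noncomputable def tripleZeta (a b c : ℕ) : ℝ≥0∞ :=
  ∑' k : ℕ+, (k : ℝ≥0∞)⁻¹ ^ a *
    ∑ n ∈ Ioo 0 (k : ℕ), (n : ℝ≥0∞)⁻¹ ^ b * ∑ m ∈ Ioo 0 n, (m : ℝ≥0∞)⁻¹ ^ c

/-- The triple zeta sum `ζ(a, b, c)` over `k > n > m`, weighted by the inverse `(k - m)⁻¹` of the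
gap between its extreme indices. Evaluated in two ways, it relates sums of triple zeta values to
double ones. Since `m < k`, the natural subtraction is exact. -/
noncomputable def gapSum (a b c : ℕ) : ℝ≥0∞ :=
  ∑' k : ℕ+, (k : ℝ≥0∞)⁻¹ ^ a * ∑ n ∈ Ioo 0 (k : ℕ), (n : ℝ≥0∞)⁻¹ ^ b *
    ∑ m ∈ Ioo 0 n, (m : ℝ≥0∞)⁻¹ ^ c * ((k - m : ℕ) : ℝ≥0∞)⁻¹

lemma gapSum_succ (a b c : ℕ) :
    gapSum a b (c + 1) = tripleZeta (a + 1) b (c + 1) + gapSum (a + 1) b c := by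
  simp only [gapSum, tripleZeta]
  rw [← ENNReal.tsum_add]
  refine tsum_congr fun k ↦ ?_
  rw [← mul_add, ← sum_add_distrib, pow_succ, mul_assoc, mul_sum (a := (k : ℝ≥0∞)⁻¹)]
  congr 1
  refine sum_congr rfl fun n hn ↦ ?_
  rw [← mul_add, ← sum_add_distrib, mul_left_comm, mul_sum (a := (k : ℝ≥0∞)⁻¹)]
  congr 1
  refine sum_congr rfl fun m hm ↦ ?_
  obtain ⟨hm0, hmn⟩ := mem_Ioo.1 hm
  rw [pow_succ, mul_assoc, inv_natCast_mul_inv_natCast_sub hm0 (hmn.trans (mem_Ioo.1 hn).2)]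
  ring

lemma gapSum_eq_sum_add (a b c : ℕ) :
    gapSum a b c = ∑ i ∈ Ico (a + 1) (a + c + 1), tripleZeta i b (a + c + 1 - i)
      + gapSum (a + c) b 0 := by
  induction c generalizing a with
  | zero => simp
  | succ c ih =>
    rw [gapSum_succ, ih, sum_eq_sum_Ico_succ_bot (by omega : a + 1 < a + (c + 1) + 1),
      show a + 1 + c = a + (c + 1) by omega, show a + (c + 1) + 1 - (a + 1) = c + 1 by omega]
    exact (add_assoc _ _ _).symm

lemma gapSum_one (b c : ℕ) :
    gapSum 1 b c = doubleZeta (b + 1) (c + 1) + gapSum b (c + 1) 0 := by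
  simp only [gapSum, doubleZeta, pow_one, pow_zero, one_mul]
  simp_rw [mul_sum (s := Ioo 0 (_ : ℕ+).val)]
  rw [tsum_sum_Ioo_comm fun k n ↦ (k : ℝ≥0∞)⁻¹ * ((n : ℝ≥0∞)⁻¹ ^ b * ∑ m ∈ Ioo 0 n,
    (m : ℝ≥0∞)⁻¹ ^ c * ((k - m : ℕ) : ℝ≥0∞)⁻¹), ← ENNReal.tsum_add]
  refine tsum_congr fun n ↦ ?_
  simp_rw [mul_left_comm _ ((n : ℝ≥0∞)⁻¹ ^ b)]
  rw [ENNReal.tsum_mul_left, tsum_inv_mul_sum_inv_sub, ← sum_add_distrib, mul_sum]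
  exact sum_congr rfl fun m _ ↦ by ring

lemma gapSum_le_tripleZeta (a b : ℕ) : gapSum a b 0 ≤ tripleZeta a b 1 := by
  refine ENNReal.tsum_le_tsum fun k ↦ ?_
  simp only [pow_zero, one_mul, pow_one]
  gcongr _ * ∑ n ∈ _, _ * ?_ with n hn
  rw [← sum_Ioo_inv_sub]
  gcongr
  exact (mem_Ioo.1 hn).2.le

lemma tsum_inv_pow_add_le_inv {a n : ℕ} (ha : 2 ≤ a) (hn : 1 ≤ n) :
    ∑' t : ℕ, ((n + 1 + t : ℕ) : ℝ≥0∞)⁻¹ ^ a ≤ (n : ℝ≥0∞)⁻¹ := by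
  have term_le (t : ℕ) : ((n + 1 + t : ℕ) : ℝ≥0∞)⁻¹ ^ a
      ≤ ((n + 1 + t : ℕ) : ℝ≥0∞)⁻¹ * ((n + 1 + t - 1 : ℕ) : ℝ≥0∞)⁻¹ :=
    calc ((n + 1 + t : ℕ) : ℝ≥0∞)⁻¹ ^ a ≤ ((n + 1 + t : ℕ) : ℝ≥0∞)⁻¹ ^ 2 :=
          pow_le_pow_right_of_le_one' (ENNReal.inv_le_one.2 (mod_cast by omega)) ha
      _ ≤ ((n + 1 + t : ℕ) : ℝ≥0∞)⁻¹ * ((n + 1 + t - 1 : ℕ) : ℝ≥0∞)⁻¹ := by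
          rw [sq]
          gcongr
          omega
  exact (ENNReal.tsum_le_tsum term_le).trans_eq (by simpa using tsum_inv_mul_inv_sub one_pos hn)

lemma tsum_inv_pow_mul_sum_le {a : ℕ} (ha : 2 ≤ a) (w : ℕ → ℝ≥0∞) :
    ∑' k : ℕ+, (k : ℝ≥0∞)⁻¹ ^ a * ∑ n ∈ Ioo 0 (k : ℕ), w n ≤ ∑' n : ℕ+, (n : ℝ≥0∞)⁻¹ * w n := by
  simp_rw [mul_sum]
  rw [tsum_sum_Ioo_comm fun k n ↦ (k : ℝ≥0∞)⁻¹ ^ a * w n]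
  refine ENNReal.tsum_le_tsum fun n ↦ ?_
  rw [ENNReal.tsum_mul_right]
  gcongr
  exact tsum_inv_pow_add_le_inv ha n.pos

lemma tsum_inv_pow_ne_top {a : ℕ} (ha : 2 ≤ a) : ∑' n : ℕ+, (n : ℝ≥0∞)⁻¹ ^ a ≠ ∞ := by
  have real_summable : Summable fun n : ℕ+ ↦ ((n : ℝ) ^ a)⁻¹ :=
    (Real.summable_nat_pow_inv.2 ha).comp_injective PNat.coe_injective
  convert real_summable.tsum_ofReal_ne_top using 3 with n
  rw [← inv_pow, ENNReal.ofReal_pow (by positivity), inv_natCast_eq_ofReal n.pos]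

lemma doubleZeta_ne_top {a b : ℕ} (ha : 2 ≤ a) (hb : 1 ≤ b) : doubleZeta a b ≠ ∞ := by
  refine ne_top_of_le_ne_top (tsum_inv_pow_ne_top (Nat.succ_le_succ hb))
    ((tsum_inv_pow_mul_sum_le ha _).trans_eq ?_)
  simp only [pow_succ']

lemma tripleZeta_ne_top {a b c : ℕ} (ha : 2 ≤ a) (hb : 1 ≤ b) (hc : 1 ≤ c) :
    tripleZeta a b c ≠ ∞ := by
  refine ne_top_of_le_ne_top (doubleZeta_ne_top (Nat.succ_le_succ hb) hc)
    ((tsum_inv_pow_mul_sum_le ha _).trans_eq ?_)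
  simp only [doubleZeta, pow_succ', mul_assoc]

lemma gapSum_ne_top {a b : ℕ} (ha : 2 ≤ a) (hb : 1 ≤ b) : gapSum a b 0 ≠ ∞ :=
  ne_top_of_le_ne_top (tripleZeta_ne_top ha hb le_rfl) (gapSum_le_tripleZeta a b)

/-- The index set of a double zeta value, fibred over its largest index `k` as in `doubleZeta`. -/
def strictAntiPairEquiv : {k : Fin 2 → ℕ // StrictAnti k ∧ ∀ i, 0 < k i} ≃
    Σ k : ℕ+, Ioo 0 (k : ℕ) where
  toFun k := ⟨⟨k.1 0, k.2.2 0⟩, k.1 1, mem_Ioo.2 ⟨k.2.2 1, k.2.1 (by simp)⟩⟩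
  invFun x := ⟨![x.1, x.2], by
    obtain ⟨k, ⟨n, hn⟩⟩ := x
    rw [mem_Ioo] at hn
    simp [Fin.strictAnti_iff_succ_lt, Fin.forall_fin_succ, hn]⟩
  left_inv k := by ext i; fin_cases i <;> rfl
  right_inv x := rfl

/-- The index set of a triple zeta value, fibred over its indices in decreasing order as in
`tripleZeta`. -/
def strictAntiTripleEquiv : {k : Fin 3 → ℕ // StrictAnti k ∧ ∀ i, 0 < k i} ≃
    Σ k : ℕ+, Σ n : Ioo 0 (k : ℕ), Ioo 0 (n : ℕ) where
  toFun k := ⟨⟨k.1 0, k.2.2 0⟩, ⟨k.1 1, mem_Ioo.2 ⟨k.2.2 1, k.2.1 (by simp)⟩⟩,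
    ⟨k.1 2, mem_Ioo.2 ⟨k.2.2 2, k.2.1 (by simp)⟩⟩⟩
  invFun x := ⟨![x.1, x.2.1, x.2.2], by
    obtain ⟨k, ⟨n, hn⟩, ⟨m, hm⟩⟩ := x
    rw [mem_Ioo] at hn hm
    simp [Fin.strictAnti_iff_succ_lt, Fin.forall_fin_succ, hn, hm]⟩
  left_inv k := by ext i; fin_cases i <;> rfl
  right_inv x := rfl

lemma mzv_eq_toReal_tsum {d : ℕ} (s : Fin d → ℕ) :
    mzv s = (∑' k : {k : Fin d → ℕ // StrictAnti k ∧ ∀ i, 0 < k i},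
      ∏ i, (k.1 i : ℝ≥0∞)⁻¹ ^ s i).toReal := by
  rw [ENNReal.tsum_toReal_eq]
  · simp [mzv, ENNReal.toReal_prod]
  · exact fun k ↦ ENNReal.prod_ne_top fun i _ ↦ by simp [(k.2.2 i).ne']

lemma mzv_double (a b : ℕ) : mzv ![a, b] = (doubleZeta a b).toReal := by
  rw [mzv_eq_toReal_tsum, ← strictAntiPairEquiv.symm.tsum_eq, ENNReal.tsum_sigma']
  simp_rw [doubleZeta, mul_sum, ← Finset.tsum_subtype]
  simp [strictAntiPairEquiv, Fin.prod_univ_two]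

lemma mzv_triple (a b c : ℕ) : mzv ![a, b, c] = (tripleZeta a b c).toReal := by
  rw [mzv_eq_toReal_tsum, ← strictAntiTripleEquiv.symm.tsum_eq, ENNReal.tsum_sigma']
  simp_rw [ENNReal.tsum_sigma', tripleZeta, mul_sum, ← Finset.tsum_subtype]
  simp [strictAntiTripleEquiv, Fin.prod_univ_three, mul_assoc]

lemma sum_tripleZeta_add_gapSum (p : ℕ) {q : ℕ} (hq : 1 ≤ q) :
    ∑ a ∈ Icc 2 q, tripleZeta a p (q + 1 - a) + gapSum q p 0
      = doubleZeta (p + 1) q + gapSum p q 0 := by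
  obtain ⟨c, rfl⟩ := Nat.exists_eq_add_of_le hq
  rw [← Ico_add_one_right_eq_Icc, ← gapSum_eq_sum_add, add_comm 1 c, gapSum_one]

lemma sum_tripleZeta_add_sum_tripleZeta {p q : ℕ} (hp : 1 ≤ p) (hq : 2 ≤ q) :
    ∑ a ∈ Icc 2 q, tripleZeta a p (q + 1 - a) + ∑ a ∈ Icc 2 p, tripleZeta a q (p + 1 - a)
      = doubleZeta (p + 1) q + doubleZeta (q + 1) p := by
  have hpq := sum_tripleZeta_add_gapSum p (one_le_two.trans hq)
  have hqp := sum_tripleZeta_add_gapSum q hp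
  have finite_qp : gapSum q p 0 ≠ ∞ := gapSum_ne_top hq hp
  have finite_pq : gapSum p q 0 ≠ ∞ :=
    ne_top_of_le_ne_top (ENNReal.add_ne_top.2 ⟨doubleZeta_ne_top (by omega) hp, finite_qp⟩)
      (le_add_self.trans_eq hqp)
  refine (ENNReal.add_left_inj (ENNReal.add_ne_top.2 ⟨finite_qp, finite_pq⟩)).1 ?_
  rw [add_add_add_comm, hpq, hqp, add_add_add_comm, add_comm (gapSum p q 0)]

theorem sum_a2b_general {p q : ℕ} (hp : 1 ≤ p) (hq : 2 ≤ q) :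
    ∑ a ∈ Icc 2 q, mzv ![a, p, q + 1 - a] + ∑ a ∈ Icc 2 p, mzv ![a, q, p + 1 - a]
      = mzv ![p + 1, q] + mzv ![q + 1, p] := by
  have hq' : 1 ≤ q := one_le_two.trans hq
  have term_ne_top {b r : ℕ} (hb : 1 ≤ b) : ∀ a ∈ Icc 2 r, tripleZeta a b (r + 1 - a) ≠ ∞ := by
    intro a ha
    rw [mem_Icc] at ha
    exact tripleZeta_ne_top ha.1 hb (by omega)
  simp_rw [mzv_triple, mzv_double]
  rw [← ENNReal.toReal_sum (term_ne_top hp), ← ENNReal.toReal_sum (term_ne_top hq'),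
    ← ENNReal.toReal_add (ENNReal.sum_ne_top.2 (term_ne_top hp))
      (ENNReal.sum_ne_top.2 (term_ne_top hq')),
    ← ENNReal.toReal_add (doubleZeta_ne_top (by omega) hq') (doubleZeta_ne_top (by omega) hp),
    sum_tripleZeta_add_sum_tripleZeta hp hq]

theorem sum_a2b (u : ℕ) (hu : 3 ≤ u) (q : ℕ) (hq : q = u - 1) :
    (∑ a ∈ Finset.Icc 2 (u - 1), mzv ![a, 2, u - a])
    = mzv ![u, 2] + mzv ![3, q] - mzv ![2, q, 1] := by
  obtain rfl : u = q + 1 := by omega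
  have h := sum_a2b_general one_le_two (show 2 ≤ q by omega)
  rw [eq_sub_iff_add_eq, add_comm (mzv ![q + 1, 2])]
  simpa using h
end
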